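/- arXiv:2309.15322 — 2 statements merged into one kernel-verified Lean document; each statement's English description precedes it below -/
import Mathlib

section
/- Suppose n ≥ 3, k ≥ 2 and the partition is balanced, and let F := ψ(G). Then for all vertices u, v ∈ V: if u and v lie in the same cluster then 0 ≤ F_{uv} ≤ 5k/n, and if u and v lie in different clusters then |F_{uv}| ≤ 10/n. -/
open MeasureTheory ProbabilityTheory Matrix Finset

namespace SBM

/-- Euclidean norm of a vector. -/
noncomputable def enorm {m : Type*} [Fintype m] (x : m → ℝ) : ℝ :=
  Real.sqrt (∑ i, x i ^ 2)

/-- Spectral (ℓ²-operator) norm of a matrix. -/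
noncomputable def specNorm {n : ℕ} (A : Matrix (Fin n) (Fin n) ℝ) : ℝ :=
  ‖Matrix.toEuclideanCLM (𝕜 := ℝ) A‖

/-- The `2 → ∞` norm: maximal Euclidean norm of a row. -/
noncomputable def n2i {n : ℕ} (A : Matrix (Fin n) (Fin n) ℝ) : ℝ :=
  ⨆ i : Fin n, enorm (A i)

/-- The mean matrix `G` of the SSBM with cluster assignment `cl`. -/
def meanMatrix (n k : ℕ) (p q : ℝ) (cl : Fin n → Fin k) : Matrix (Fin n) (Fin n) ℝ :=
  Matrix.of fun u v => if cl u = cl v then p else q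

/-- The size of cluster `i`. -/
def clusterSize {n k : ℕ} (cl : Fin n → Fin k) (i : Fin k) : ℕ :=
  (Finset.univ.filter fun v => cl v = i).card

/-- The partition is balanced: every cluster size is within a `1 ± 1/(16 log n)` factor
of `n / k`. -/
noncomputable def Balanced (n k : ℕ) (cl : Fin n → Fin k) : Prop :=
  ∀ i : Fin k,
    (1 - 1 / (16 * Real.log n)) * ((n : ℝ) / k) ≤ (clusterSize cl i : ℝ) ∧
    (clusterSize cl i : ℝ) ≤ (1 + 1 / (16 * Real.log n)) * ((n : ℝ) / k)

/-- `lam, v` is a spectral decomposition of `A`: eigenvalues in non-increasing order with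
an orthonormal eigenbasis. -/
def IsSpectralDecomp {n : ℕ} (A : Matrix (Fin n) (Fin n) ℝ)
    (lam : Fin n → ℝ) (v : Fin n → Fin n → ℝ) : Prop :=
  Antitone lam ∧
  (∀ i j, dotProduct (v i) (v j) = if i = j then (1 : ℝ) else 0) ∧
  A = ∑ i, lam i • Matrix.vecMulVec (v i) (v i)

/-- Orthogonal projection onto the span of the top `k` eigenvectors `v 0, …, v (k-1)`. -/
noncomputable def projTop {n : ℕ} (k : ℕ) (v : Fin n → Fin n → ℝ) :
    Matrix (Fin n) (Fin n) ℝ :=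
  ∑ i ∈ Finset.univ.filter (fun i : Fin n => (i : ℕ) < k), Matrix.vecMulVec (v i) (v i)

/-- The column of `A` indexed by `u`. -/
def column {n : ℕ} (A : Matrix (Fin n) (Fin n) ℝ) (u : Fin n) : Fin n → ℝ :=
  fun i => A i u

/-- `ψ(M) = A·M² + B·M` where `A = -1/(λ₁μ)`, `B = 1/λ₁ + 1/μ`. -/
noncomputable def psiM {n : ℕ} (lam1 mu : ℝ) (M : Matrix (Fin n) (Fin n) ℝ) :
    Matrix (Fin n) (Fin n) ℝ :=
  (-(1 / (lam1 * mu))) • (M * M) + (1 / lam1 + 1 / mu) • M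

/-- `φ(M) = ψ(M)^r`. -/
noncomputable def phiM {n : ℕ} (lam1 mu : ℝ) (r : ℕ) (M : Matrix (Fin n) (Fin n) ℝ) :
    Matrix (Fin n) (Fin n) ℝ :=
  psiM lam1 mu M ^ r

/-- `ψ(t) = A·t² + B·t` where `A = -1/(λ₁μ)`, `B = 1/λ₁ + 1/μ`. -/
noncomputable def psiR (lam1 mu t : ℝ) : ℝ :=
  (-(1 / (lam1 * mu))) * t ^ 2 + (1 / lam1 + 1 / mu) * t

/-- `φ(t) = ψ(t)^r`. -/
noncomputable def phiR (lam1 mu : ℝ) (r : ℕ) (t : ℝ) : ℝ := psiR lam1 mu t ^ r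

end SBM

/-!
The row sums of `G` locate its top eigenvalue: Gershgorin's theorem bounds `λ₁` by the largest row
sum, and the Rayleigh quotient at the all-ones vector bounds it below by the smallest one. Hence
`λ₁ = n q + (p - q) τ` with `τ` between the smallest and the largest cluster size. Substituting
this into `ψ(G)`, with `m = n / k` and `s_u` the size of the cluster of `u`, cancels all terms of
leading order:

* `F_{uv} - 1 / m = ((p - q) (m - s_u) + q (m + τ - 2 s_u)) / (λ₁ m)` inside a cluster,
* `F_{uv} = q (m + τ - s_u - s_v) / (λ₁ m)` across clusters.

The parentheses only compare sizes that agree with `m` up to a factor `1 ± ε`, while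
`λ₁ m ≥ n q m` and `m ≤ 3 τ`, so both errors are of relative order `ε`.
-/

namespace SBM

section Spectrum

lemma dotProduct_sum_smul_vecMulVec_mulVec {ι κ R : Type*} [Fintype ι] [Fintype κ]
    [CommSemiring R] (c : κ → R) (v : κ → ι → R) (x : ι → R) :
    x ⬝ᵥ (∑ l, c l • vecMulVec (v l) (v l)) *ᵥ x = ∑ l, c l * (v l ⬝ᵥ x) ^ 2 := by
  simp only [sum_mulVec, smul_mulVec, vecMulVec_mulVec, op_smul_eq_smul, dotProduct_sum,
    dotProduct_smul, smul_eq_mul]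
  exact sum_congr rfl fun l _ => by rw [dotProduct_comm x, sq]

lemma sum_sq_dotProduct_eq_self {ι R : Type*} [Fintype ι] [DecidableEq ι] [CommRing R]
    {v : ι → ι → R} (hv : ∀ i j, v i ⬝ᵥ v j = if i = j then 1 else 0) (x : ι → R) :
    ∑ l, (v l ⬝ᵥ x) ^ 2 = x ⬝ᵥ x := by
  have hrows : of v * (of v)ᵀ = 1 := by
    ext i j
    exact (hv i j).trans (one_apply ..).symm
  calc ∑ l, (v l ⬝ᵥ x) ^ 2 = (of v *ᵥ x) ⬝ᵥ (of v *ᵥ x) := sum_congr rfl fun _ _ => sq _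
    _ = x ⬝ᵥ ((of v)ᵀ * of v) *ᵥ x := by
        rw [← mulVec_mulVec, dotProduct_mulVec x, vecMul_transpose]
    _ = x ⬝ᵥ x := by rw [mul_eq_one_comm.mp hrows, one_mulVec]

lemma eigenvalue_le_of_row_sum_le {ι : Type*} [Fintype ι] [DecidableEq ι] {A : Matrix ι ι ℝ}
    (hA : ∀ i j, 0 ≤ A i j) {R : ℝ} (hR : ∀ i, ∑ j, A i j ≤ R) {μ : ℝ}
    (hμ : Module.End.HasEigenvalue (toLin' A) μ) : μ ≤ R := by
  obtain ⟨i, hi⟩ := eigenvalue_mem_ball hμ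
  have hgersh : μ - A i i ≤ ∑ j ∈ univ.erase i, A i j := by
    simpa only [Real.norm_of_nonneg (hA i _)] using (abs_le.mp (mem_closedBall_iff_norm.mp hi)).2
  linarith [hR i, add_sum_erase univ (A i) (mem_univ i)]

variable {n : ℕ} {A : Matrix (Fin n) (Fin n) ℝ} {lam : Fin n → ℝ} {v : Fin n → Fin n → ℝ}

lemma IsSpectralDecomp.hasEigenvalue (h : IsSpectralDecomp A lam v) (l : Fin n) :
    Module.End.HasEigenvalue (toLin' A) (lam l) := by
  obtain ⟨-, hv, rfl⟩ := h
  refine Module.End.hasEigenvalue_of_hasEigenvector (x := v l) ⟨?_, fun hzero => ?_⟩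
  · rw [Module.End.mem_eigenspace_iff]
    simp only [toLin'_apply, sum_mulVec, smul_mulVec, vecMulVec_mulVec, hv]
    simp
  · simpa [hzero] using hv l l

lemma IsSpectralDecomp.dotProduct_mulVec_le (h : IsSpectralDecomp A lam v) (hn : 0 < n)
    (x : Fin n → ℝ) : x ⬝ᵥ A *ᵥ x ≤ lam ⟨0, hn⟩ * (x ⬝ᵥ x) := by
  obtain ⟨hanti, hv, rfl⟩ := h
  rw [dotProduct_sum_smul_vecMulVec_mulVec, ← sum_sq_dotProduct_eq_self hv, mul_sum]
  gcongr with l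
  exact hanti (Nat.zero_le l)

lemma IsSpectralDecomp.le_of_le_row_sum (h : IsSpectralDecomp A lam v) (hn : 0 < n) {R : ℝ}
    (hR : ∀ i, R ≤ ∑ j, A i j) : R ≤ lam ⟨0, hn⟩ := by
  have hrayleigh := h.dotProduct_mulVec_le hn 1
  have hsum : n * R ≤ 1 ⬝ᵥ A *ᵥ 1 := by
    simpa [mulVec, dotProduct] using sum_le_sum fun i (_ : i ∈ univ) => hR i
  rw [one_dotProduct_one, Fintype.card_fin, mul_comm] at hrayleigh
  exact le_of_mul_le_mul_left (hsum.trans hrayleigh) (Nat.cast_pos.mpr hn)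

end Spectrum

section MeanMatrix

variable {n k : ℕ} {p q ε : ℝ} {cl : Fin n → Fin k}

/-- Every cluster size equals `n / k` up to a relative error `ε`; thus `Balanced` is the case
`ε = 1 / (16 log n)`. -/
def IsBalancedWithin (ε : ℝ) (cl : Fin n → Fin k) : Prop :=
  ∀ i, |(clusterSize cl i : ℝ) - n / k| ≤ ε * (n / k)

lemma Balanced.isBalancedWithin (hn : 3 ≤ n) (h : Balanced n k cl) :
    IsBalancedWithin (1 / 16) cl := by
  have hn' : (3 : ℝ) ≤ n := by exact_mod_cast hn
  have hlog : 1 ≤ Real.log n := by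
    rw [Real.le_log_iff_exp_le (by linarith)]
    linarith [Real.exp_one_lt_d9]
  have htol : 1 / (16 * Real.log n) ≤ 1 / 16 :=
    one_div_le_one_div_of_le (by norm_num) (by linarith)
  intro i
  obtain ⟨hlower, hupper⟩ := h i
  calc |(clusterSize cl i : ℝ) - n / k| ≤ 1 / (16 * Real.log n) * (n / k) :=
        abs_sub_le_iff.mpr ⟨by linarith, by linarith⟩
    _ ≤ 1 / 16 * (n / k) := by gcongr

lemma sum_indicator_cluster (cl : Fin n → Fin k) (i : Fin k) :
    ∑ w, (if i = cl w then (1 : ℝ) else 0) = clusterSize cl i := by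
  simp [clusterSize, eq_comm]

lemma meanMatrix_apply (p q : ℝ) (cl : Fin n → Fin k) (u v : Fin n) :
    meanMatrix n k p q cl u v = q + (p - q) * if cl u = cl v then 1 else 0 := by
  simp only [meanMatrix, of_apply]
  split_ifs <;> ring

lemma meanMatrix_row_sum (p q : ℝ) (cl : Fin n → Fin k) (u : Fin n) :
    ∑ v, meanMatrix n k p q cl u v = n * q + (p - q) * clusterSize cl (cl u) := by
  simp only [meanMatrix_apply, sum_add_distrib, ← mul_sum, sum_indicator_cluster]
  simp

lemma meanMatrix_mul_self_apply (p q : ℝ) (cl : Fin n → Fin k) (u v : Fin n) :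
    (meanMatrix n k p q cl * meanMatrix n k p q cl) u v =
      n * q ^ 2 + (p - q) * q * (clusterSize cl (cl u) + clusterSize cl (cl v)) +
        if cl u = cl v then (p - q) ^ 2 * clusterSize cl (cl u) else 0 := by
  have hcommon : ∑ w, (if cl u = cl w then (1 : ℝ) else 0) * (if cl v = cl w then 1 else 0) =
      if cl u = cl v then (clusterSize cl (cl u) : ℝ) else 0 := by
    split_ifs with h
    · simp only [← h, ← sum_indicator_cluster]
      exact sum_congr rfl fun w _ => by split_ifs <;> simp
    · exact sum_eq_zero fun w _ => by grind
  calc (meanMatrix n k p q cl * meanMatrix n k p q cl) u v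
      = ∑ w, (q ^ 2 + (p - q) * q * ((if cl u = cl w then 1 else 0) + if cl v = cl w then 1 else 0)
          + (p - q) ^ 2 * ((if cl u = cl w then 1 else 0) * if cl v = cl w then 1 else 0)) := by
        rw [mul_apply]
        refine sum_congr rfl fun w _ => ?_
        simp only [meanMatrix_apply, @eq_comm _ (cl w) (cl v)]
        ring
    _ = _ := by
        simp only [sum_add_distrib, ← mul_sum, sum_indicator_cluster, hcommon]
        simp

lemma psiM_meanMatrix_apply_of_eq (hpq : p ≠ q) {m τ : ℝ} (hm : m ≠ 0)
    (hτ : n * q + (p - q) * τ ≠ 0) {u v : Fin n} (huv : cl u = cl v) :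
    psiM (n * q + (p - q) * τ) ((p - q) * m) (meanMatrix n k p q cl) u v =
      1 / m + ((p - q) * (m - clusterSize cl (cl u)) + q * (m + τ - 2 * clusterSize cl (cl u))) /
        ((n * q + (p - q) * τ) * m) := by
  have hd : p - q ≠ 0 := sub_ne_zero.mpr hpq
  simp only [psiM, Matrix.add_apply, Matrix.smul_apply, smul_eq_mul, meanMatrix_mul_self_apply,
    meanMatrix_apply, huv, if_true]
  field_simp
  ring

lemma psiM_meanMatrix_apply_of_ne (hpq : p ≠ q) {m τ : ℝ} (hm : m ≠ 0)
    (hτ : n * q + (p - q) * τ ≠ 0) {u v : Fin n} (huv : cl u ≠ cl v) :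
    psiM (n * q + (p - q) * τ) ((p - q) * m) (meanMatrix n k p q cl) u v =
      q * (m + τ - clusterSize cl (cl u) - clusterSize cl (cl v)) /
        ((n * q + (p - q) * τ) * m) := by
  have hd : p - q ≠ 0 := sub_ne_zero.mpr hpq
  simp only [psiM, Matrix.add_apply, Matrix.smul_apply, smul_eq_mul, meanMatrix_mul_self_apply,
    meanMatrix_apply, huv, if_false]
  field_simp
  ring

lemma IsSpectralDecomp.exists_top_eigenvalue_eq (hn : 0 < n) (hq : 0 ≤ q) (hpq : q < p)
    (hcl : IsBalancedWithin ε cl) {lam : Fin n → ℝ} {x : Fin n → Fin n → ℝ}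
    (hdec : IsSpectralDecomp (meanMatrix n k p q cl) lam x) :
    ∃ τ : ℝ, |τ - n / k| ≤ ε * (n / k) ∧ lam ⟨0, hn⟩ = n * q + (p - q) * τ := by
  have hd : 0 < p - q := sub_pos.mpr hpq
  have hsize (u) := abs_sub_le_iff.mp (hcl (cl u))
  have hlower : n * q + (p - q) * (n / k - ε * (n / k)) ≤ lam ⟨0, hn⟩ := by
    refine hdec.le_of_le_row_sum hn fun u => ?_
    rw [meanMatrix_row_sum]
    gcongr
    linarith [(hsize u).2]
  have hupper : lam ⟨0, hn⟩ ≤ n * q + (p - q) * (n / k + ε * (n / k)) := by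
    refine eigenvalue_le_of_row_sum_le (fun u w => ?_) (fun u => ?_) (hdec.hasEigenvalue ⟨0, hn⟩)
    · rw [meanMatrix_apply]
      positivity
    · rw [meanMatrix_row_sum]
      gcongr
      linarith [(hsize u).1]
  refine ⟨(lam ⟨0, hn⟩ - n * q) / (p - q), abs_sub_le_iff.mpr ⟨?_, ?_⟩, by field_simp; ring⟩
  · rw [sub_le_iff_le_add, div_le_iff₀ hd]
    linarith
  · rw [sub_le_comm, le_div_iff₀ hd]
    linarith

end MeanMatrix

section EntryBounds

variable {N d q m τ s t ε : ℝ}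

lemma abs_same_cluster_error_le (hd : 0 < d) (hq : 0 ≤ q) (hm : 0 < m) (hmN : m ≤ N)
    (hmτ : m ≤ 3 * τ) (hs : |s - m| ≤ ε * m) (hτ : |τ - m| ≤ ε * m) :
    |(d * (m - s) + q * (m + τ - 2 * s)) / ((N * q + d * τ) * m)| ≤ 3 * ε * (1 / m) := by
  have hε₀ : 0 ≤ ε := nonneg_of_mul_nonneg_left ((abs_nonneg _).trans hs) hm
  obtain ⟨hs₁, hs₂⟩ := abs_sub_le_iff.mp hs
  obtain ⟨hτ₁, hτ₂⟩ := abs_sub_le_iff.mp hτ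
  have hL : 0 < N * q + d * τ := by
    have : 0 < τ := by linarith
    have : 0 < N := by linarith
    positivity
  have hnum : |d * (m - s) + q * (m + τ - 2 * s)| ≤ 3 * ε * (N * q + d * τ) :=
    calc |d * (m - s) + q * (m + τ - 2 * s)|
        ≤ |d * (m - s)| + |q * (m + τ - 2 * s)| := abs_add_le _ _
      _ = d * |m - s| + q * |m + τ - 2 * s| := by
          rw [abs_mul, abs_mul, abs_of_pos hd, abs_of_nonneg hq]
      _ ≤ d * (ε * m) + q * (3 * ε * m) := by
          gcongr <;> exact abs_le.mpr ⟨by linarith, by linarith⟩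
      _ ≤ d * (ε * (3 * τ)) + q * (3 * ε * N) := by gcongr
      _ = 3 * ε * (N * q + d * τ) := by ring
  rw [abs_div, abs_of_pos (mul_pos hL hm), div_le_iff₀ (mul_pos hL hm)]
  exact hnum.trans_eq (by field_simp)

lemma abs_cross_cluster_error_le (hd : 0 < d) (hq : 0 ≤ q) (hm : 0 < m) (hN : 0 < N)
    (hτ₀ : 0 < τ) (hs : |s - m| ≤ ε * m) (ht : |t - m| ≤ ε * m) (hτ : |τ - m| ≤ ε * m) :
    |q * (m + τ - s - t) / ((N * q + d * τ) * m)| ≤ 3 * ε / N := by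
  have hε₀ : 0 ≤ ε := nonneg_of_mul_nonneg_left ((abs_nonneg _).trans hs) hm
  have hL : 0 < N * q + d * τ := by positivity
  have hsizes : |m + τ - s - t| ≤ 3 * ε * m := by
    rw [abs_le] at hs ht hτ ⊢
    constructor <;> linarith
  rw [abs_div, abs_of_pos (mul_pos hL hm), div_le_div_iff₀ (mul_pos hL hm) hN]
  calc |q * (m + τ - s - t)| * N = q * |m + τ - s - t| * N := by rw [abs_mul, abs_of_nonneg hq]
    _ ≤ q * (3 * ε * m) * N := by gcongr
    _ = 3 * ε * (N * q * m) := by ring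
    _ ≤ 3 * ε * ((N * q + d * τ) * m) := by
        gcongr
        exact le_add_of_nonneg_right (by positivity)

end EntryBounds

end SBM

open SBM in
theorem entries_of_psi_mean_general {n k : ℕ} (hn : 0 < n) {p q ε : ℝ} (hq : 0 ≤ q) (hpq : q < p)
    (hε : ε ≤ 2 / 3) {cl : Fin n → Fin k} (hcl : IsBalancedWithin ε cl)
    {lam : Fin n → ℝ} {x : Fin n → Fin n → ℝ}
    (hdec : IsSpectralDecomp (meanMatrix n k p q cl) lam x) (u v : Fin n) :
    (cl u = cl v →
      |psiM (lam ⟨0, hn⟩) ((p - q) * (n / k)) (meanMatrix n k p q cl) u v - k / n| ≤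
        3 * ε * (k / n)) ∧
    (cl u ≠ cl v →
      |psiM (lam ⟨0, hn⟩) ((p - q) * (n / k)) (meanMatrix n k p q cl) u v| ≤ 3 * ε / n) := by
  obtain ⟨τ, hτ, hlam⟩ := hdec.exists_top_eigenvalue_eq hn hq hpq hcl
  have hd : 0 < p - q := sub_pos.mpr hpq
  have hn' : (0 : ℝ) < n := Nat.cast_pos.mpr hn
  have hk : (1 : ℝ) ≤ k := Nat.one_le_cast.mpr (cl u).pos
  have hm : (0 : ℝ) < n / k := by positivity
  have hmτ : (n / k : ℝ) ≤ 3 * τ := by nlinarith [(abs_sub_le_iff.mp hτ).2]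
  have hτ₀ : 0 < τ := by linarith
  have hL : n * q + (p - q) * τ ≠ 0 := by positivity
  rw [hlam]
  refine ⟨fun huv => ?_, fun huv => ?_⟩
  · rw [psiM_meanMatrix_apply_of_eq hpq.ne' hm.ne' hL huv, ← one_div_div (n : ℝ) k,
      add_sub_cancel_left]
    exact abs_same_cluster_error_le hd hq hm (div_le_self hn'.le hk) hmτ (hcl _) hτ
  · rw [psiM_meanMatrix_apply_of_ne hpq.ne' hm.ne' hL huv]
    exact abs_cross_cluster_error_le hd hq hm hn' hτ₀ (hcl _) (hcl _) hτ

open SBM in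
/-- Entries of `F = ψ(G)`. Suppose `n ≥ 3`, `k ≥ 2` and the partition is
balanced.  For all `u, v`: if `u, v` are in the same cluster then `0 ≤ F_{uv} ≤ 5k/n`;
otherwise `|F_{uv}| ≤ 10/n`. -/
theorem entries_of_psi_mean (n k : ℕ) (hn : 3 ≤ n) (hk : 2 ≤ k)
    (p q : ℝ) (hq : 0 ≤ q) (hpq : q < p) (hp : p ≤ 1)
    (cl : Fin n → Fin k) (hbal : Balanced n k cl)
    (lamG : Fin n → ℝ) (vG : Fin n → Fin n → ℝ)
    (hdecG : IsSpectralDecomp (meanMatrix n k p q cl) lamG vG) :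
    ∀ u v : Fin n,
      (cl u = cl v →
        0 ≤ psiM (lamG ⟨0, by omega⟩) ((p - q) * ((n : ℝ) / k))
              (meanMatrix n k p q cl) u v ∧
        psiM (lamG ⟨0, by omega⟩) ((p - q) * ((n : ℝ) / k))
              (meanMatrix n k p q cl) u v ≤ 5 * (k : ℝ) / n) ∧
      (cl u ≠ cl v →
        |psiM (lamG ⟨0, by omega⟩) ((p - q) * ((n : ℝ) / k))
              (meanMatrix n k p q cl) u v| ≤ 10 / (n : ℝ)) := by
  intro u v
  obtain ⟨hsame, hcross⟩ := entries_of_psi_mean_general (by omega) hq hpq (by norm_num)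
    (hbal.isBalancedWithin hn) hdecG u v
  have hkn : (0 : ℝ) ≤ k / n := by positivity
  refine ⟨fun huv => ?_, fun huv => (hcross huv).trans (by gcongr; norm_num)⟩
  rw [mul_div_assoc]
  constructor <;> linarith [abs_le.mp (hsame huv)]
end

section
/- There exist constants C, c > 0 such that the following holds. If the partition is balanced, k ≥ 2, and n ≥ C·k²·p·(log n)¹²/(p−q)², then with probability at least 1 − c·n^{−2} over the choice of E, ‖E·M′‖_{2→∞} ≤ 6·10⁶·√(kp)·(log n)², where D := ψ(Ĝ) − ψ(G), F := ψ(G), F̂ := ψ(Ĝ), r := ⌈log n⌉, and M′ := Σ_{t=1}^{r−1} D^t · F · F̂^{r−1−t}. -/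
open MeasureTheory ProbabilityTheory Matrix Finset

namespace SBM

/-- The SSBM noise model: `E` is a random symmetric matrix whose upper-triangular entries
are independent, with `E_{uv} = 1 − G_{uv}` with probability `G_{uv}` and
`E_{uv} = −G_{uv}` with probability `1 − G_{uv}`, where `G` is the mean matrix. -/
def NoiseModel {Ω : Type*} [MeasureSpace Ω] {n k : ℕ} (p q : ℝ) (cl : Fin n → Fin k)
    (E : Ω → Matrix (Fin n) (Fin n) ℝ) : Prop :=
  (∀ ω, (E ω).IsSymm) ∧
  (∀ u v : Fin n, Measurable fun ω => E ω u v) ∧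
  iIndepFun (m := fun _ : {e : Fin n × Fin n // e.1 ≤ e.2} => (inferInstance : MeasurableSpace ℝ))
    (fun e ω => E ω e.1.1 e.1.2) ℙ ∧
  (∀ u v : Fin n, u ≤ v →
    Measure.map (fun ω => E ω u v) ℙ =
      ENNReal.ofReal (meanMatrix n k p q cl u v) •
        Measure.dirac (1 - meanMatrix n k p q cl u v) +
      ENNReal.ofReal (1 - meanMatrix n k p q cl u v) •
        Measure.dirac (-(meanMatrix n k p q cl u v)))

end SBM

/-!
Put `D = ψ(G + E) - ψ(G)`. It is `E` times a scalar plus a quadratic polynomial in `G` and `E`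
whose terms containing `G` are `G * E` and `E * G`. Hence in `E ^ a * D ^ t * F` the powers of `E`
can be pushed to the right until they meet a factor `G` or `F = ψ(G)`. Both absorb the projection
`H * K` onto the cluster-wise constant vectors, where `H` is the cluster indicator matrix and `K`
averages over the clusters, so only rows of `E ^ b * H` and `‖K‖ = O(√(k / n))` enter the estimate:
this is where the factor `√(k / n)` is gained. Summing over `t` is a geometric series in
`‖D‖ = O(1 / log n)`, the powers of `F̂` being bounded because `‖F̂‖ ≤ 1 + 1 / log n`.

The rows of `E ^ b * B` are bounded by moments. A product of entries of `E` along walks from a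
common root has nonzero mean only if every edge is traversed at least twice, and the walks visit at
most as many vertices other than the root as they use edges. Counting walks by their vertex sets
therefore yields at most a factor `n * p` for every two steps, and Markov's inequality applies. The
case `B = 1` bounds `‖E‖`, since `‖E‖ ^ r = ‖E ^ r‖`.
-/

namespace SBM

section Counting

lemma sum_pow_card_le {V : Type*} [Fintype V] {p : ℝ} (hp : 0 ≤ p)
    (hVp : 1 ≤ Fintype.card V * p) (h : ℕ) :
    ∑ W : Finset V with #W ≤ h, p ^ #W ≤ (h + 1) * (Fintype.card V * p) ^ h := by
  classical
  have term_le (j : ℕ) (hj : j ≤ h) :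
      (Fintype.card V).choose j * p ^ j ≤ (Fintype.card V * p) ^ h := by
    calc (Fintype.card V).choose j * p ^ j ≤ (Fintype.card V : ℝ) ^ j * p ^ j := by
          gcongr; exact_mod_cast Nat.choose_le_pow _ _
      _ = (Fintype.card V * p) ^ j := (mul_pow ..).symm
      _ ≤ _ := pow_le_pow_right₀ hVp hj
  calc ∑ W : Finset V with #W ≤ h, p ^ #W
      = ∑ j ∈ range (h + 1), ∑ W : Finset V with #W = j, p ^ #W := by
        rw [← sum_fiberwise_of_maps_to (g := card) (t := range (h + 1))
          fun W hW ↦ by simpa [Nat.lt_succ_iff] using hW]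
        refine sum_congr rfl fun j hj ↦ sum_congr ?_ fun _ _ ↦ rfl
        ext W
        simp only [mem_filter, mem_univ, true_and, mem_range] at hj ⊢
        omega
    _ = ∑ j ∈ range (h + 1), (Fintype.card V).choose j * p ^ j := by
        refine sum_congr rfl fun j _ ↦ ?_
        rw [← Finset.card_univ, ← card_powersetCard, ← nsmul_eq_mul, ← sum_const]
        refine sum_congr (by ext; simp [mem_powersetCard]) fun W hW ↦ ?_
        rw [(mem_powersetCard.mp hW).2]
    _ ≤ ∑ _j ∈ range (h + 1), (Fintype.card V * p) ^ h :=
        sum_le_sum fun j hj ↦ term_le j (Nat.lt_succ_iff.mp (mem_range.mp hj))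
    _ = _ := by simp

variable {ι V : Type*} [Fintype ι] [DecidableEq V]

lemma card_erase_root_le_card_edges {rank : ι → ℕ} {root : V} {src tgt : ι → V}
    (hsrc : ∀ i, src i = root ∨ ∃ j, rank j < rank i ∧ src i = tgt j) :
    #((univ.image tgt).erase root) ≤ #(univ.image fun i ↦ s(src i, tgt i)) := by
  rcases isEmpty_or_nonempty ι with _ | _
  · simp
  have exists_first : ∀ y ∈ (univ.image tgt).erase root,
      ∃ i, tgt i = y ∧ ∀ j, tgt j = y → rank i ≤ rank j := by
    intro y hy
    obtain ⟨i₀, -, hi₀⟩ := mem_image.mp (mem_of_mem_erase hy)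
    obtain ⟨i, hi, hmin⟩ := exists_min_image {i | tgt i = y} rank ⟨i₀, by simpa using hi₀⟩
    exact ⟨i, by simpa using hi, fun j hj ↦ hmin j (by simpa using hj)⟩
  choose! first htgt hmin using exists_first
  have src_eq (y) {z} (hz : src (first y) = z) (hz_root : z ≠ root) :
      ∃ j, rank j < rank (first y) ∧ z = tgt j := by
    subst hz
    exact (hsrc (first y)).resolve_left hz_root
  -- Send a vertex to the edge along which it is first reached.
  refine card_le_card_of_injOn (fun y ↦ s(src (first y), tgt (first y)))
    (fun y _ ↦ mem_image_of_mem _ (mem_univ _)) fun y hy z hz hyz ↦ ?_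
  rcases Sym2.eq_iff.mp hyz with ⟨-, h⟩ | ⟨hy_src, hz_src⟩
  · rwa [htgt y hy, htgt z hz] at h
  · rw [htgt z hz] at hy_src
    rw [htgt y hy] at hz_src
    obtain ⟨i, hi, hzi⟩ := src_eq y hy_src (ne_of_mem_erase hz)
    obtain ⟨j, hj, hyj⟩ := src_eq z hz_src.symm (ne_of_mem_erase hy)
    exact absurd (hmin z hz i hzi.symm) (by have := hmin y hy j hyj.symm; omega)

variable [Fintype V]

lemma card_filter_image_erase_le [DecidableEq ι] (root : V) (W : Finset V) :
    #{x : ι → V | (univ.image x).erase root = W} ≤ (#W + 1) ^ Fintype.card ι := by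
  have hsub : ({x : ι → V | (univ.image x).erase root = W} : Finset (ι → V)) ⊆
      Fintype.piFinset fun _ ↦ insert root W := by
    intro x hx
    rw [← (mem_filter.mp hx).2, Fintype.mem_piFinset]
    intro i
    by_cases hi : x i = root <;> simp [hi]
  calc _ ≤ #(Fintype.piFinset fun _ : ι ↦ insert root W) := card_le_card hsub
    _ = #(insert root W) ^ Fintype.card ι := by simp
    _ ≤ _ := Nat.pow_le_pow_left (card_insert_le _ _) _

lemma sum_pow_card_image_erase_le [DecidableEq ι] {p : ℝ} (hp : 0 ≤ p)
    (hVp : 1 ≤ Fintype.card V * p) (root : V) (h : ℕ) :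
    ∑ x : ι → V with #((univ.image x).erase root) ≤ h, p ^ #((univ.image x).erase root) ≤
      (Fintype.card V * p) ^ h * (h + 1) ^ (Fintype.card ι + 1) := by
  calc _ = ∑ W : Finset V with #W ≤ h,
        #{x : ι → V | (univ.image x).erase root = W} * p ^ #W := by
        rw [← sum_fiberwise_of_maps_to (g := fun x : ι → V ↦ (univ.image x).erase root)
          (t := {W : Finset V | #W ≤ h}) fun x hx ↦ by simpa using hx]
        refine sum_congr rfl fun W hW ↦ ?_
        rw [← nsmul_eq_mul, ← sum_const, filter_filter]
        refine sum_congr (filter_congr fun x _ ↦ ?_) fun x hx ↦ by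
          rw [(mem_filter.mp hx).2]
        refine and_iff_right_of_imp fun hx ↦ ?_
        rw [hx]
        exact (mem_filter.mp hW).2
    _ ≤ ∑ W : Finset V with #W ≤ h, (h + 1 : ℝ) ^ Fintype.card ι * p ^ #W := by
        refine sum_le_sum fun W hW ↦ ?_
        have hWh : #W ≤ h := (mem_filter.mp hW).2
        gcongr
        exact_mod_cast (card_filter_image_erase_le root W).trans
          (Nat.pow_le_pow_left (Nat.succ_le_succ hWh) _)
    _ ≤ (h + 1) ^ Fintype.card ι * ((h + 1) * (Fintype.card V * p) ^ h) := by
        rw [← mul_sum]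
        gcongr
        exact sum_pow_card_le hp hVp h
    _ = _ := by ring

end Counting

section Walks

/-- The `a + 1` vertices of the walk that starts at `u` and then visits `y 0, …, y (a - 1)`. -/
def walk {V : Type*} {a : ℕ} (u : V) (y : Fin a → V) : Fin (a + 1) → V := Fin.cons u y

lemma pow_mul_apply_eq_sum_walk {V κ R : Type*} [Fintype V] [DecidableEq V] [CommSemiring R]
    (M : Matrix V V R) (B : Matrix V κ R) (a : ℕ) (u : V) (i : κ) :
    (M ^ a * B) u i = ∑ y : Fin a → V,
      (∏ j, M (walk u y j.castSucc) (y j)) * B (walk u y (Fin.last a)) i := by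
  induction a generalizing u with
  | zero => simp [walk]
  | succ a ih =>
    rw [pow_succ', Matrix.mul_assoc, Matrix.mul_apply,
      ← (Fin.consEquiv fun _ : Fin (a + 1) ↦ V).sum_comp, Fintype.sum_prod_type]
    refine sum_congr rfl fun v _ ↦ ?_
    rw [ih v, mul_sum]
    refine sum_congr rfl fun y _ ↦ ?_
    rw [Fin.prod_univ_succ]
    simp [walk, Fin.consEquiv, ← Fin.succ_last, mul_assoc]

lemma walk_castSucc_eq {V : Type*} {a : ℕ} (u : V) (y : Fin a → V) (j : Fin a) :
    walk u y j.castSucc = u ∨ ∃ i < j, walk u y j.castSucc = y i := by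
  obtain _ | a := a
  · exact j.elim0
  rcases Fin.eq_zero_or_eq_succ j with rfl | ⟨i, rfl⟩
  · exact .inl rfl
  · exact .inr ⟨i.castSucc, Fin.castSucc_lt_succ, rfl⟩

end Walks

section RowNorms

variable {V κ : Type*} [Fintype κ]

lemma enorm_nonneg (x : κ → ℝ) : 0 ≤ enorm x := Real.sqrt_nonneg _

lemma enorm_sq (x : κ → ℝ) : enorm x ^ 2 = ∑ i, x i ^ 2 :=
  Real.sq_sqrt (sum_nonneg fun _ _ ↦ sq_nonneg _)

lemma enorm_eq_norm_toLp (x : κ → ℝ) : enorm x = ‖WithLp.toLp 2 x‖ := by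
  simp [enorm, EuclideanSpace.norm_eq]

lemma abs_dotProduct_le_enorm_mul_enorm (x y : κ → ℝ) : |x ⬝ᵥ y| ≤ enorm x * enorm y := by
  rw [enorm_eq_norm_toLp, enorm_eq_norm_toLp, mul_comm]
  simpa [EuclideanSpace.inner_eq_star_dotProduct] using
    abs_real_inner_le_norm (WithLp.toLp 2 y) (WithLp.toLp 2 x)

variable [Fintype V] [DecidableEq V]

lemma enorm_pow_mul_sq_eq_sum (M : Matrix V V ℝ) (B : Matrix V κ ℝ) (a : ℕ) (u : V) :
    enorm ((M ^ a * B) u) ^ 2 = ∑ y : Fin 2 → Fin a → V,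
      B (walk u (y 0) (Fin.last a)) ⬝ᵥ B (walk u (y 1) (Fin.last a)) *
        ∏ b, ∏ j, M (walk u (y b) j.castSucc) (y b j) := by
  simp_rw [enorm_sq, pow_mul_apply_eq_sum_walk, Fintype.sum_pow]
  rw [sum_comm]
  refine sum_congr rfl fun y _ ↦ ?_
  rw [dotProduct, sum_mul]
  refine sum_congr rfl fun i _ ↦ ?_
  rw [prod_mul_distrib, mul_comm, Fin.prod_univ_two fun b ↦ B (walk u (y b) (Fin.last a)) i]

lemma enorm_pow_mul_sq_pow_eq_sum (M : Matrix V V ℝ) (B : Matrix V κ ℝ) (a : ℕ) (u : V)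
    (m : ℕ) :
    (enorm ((M ^ a * B) u) ^ 2) ^ m = ∑ z : Fin m × Fin 2 × Fin a → V,
      (∏ l, B (walk u (fun j ↦ z (l, 0, j)) (Fin.last a)) ⬝ᵥ
        B (walk u (fun j ↦ z (l, 1, j)) (Fin.last a))) *
      ∏ t : Fin m × Fin 2 × Fin a,
        M (walk u (fun j ↦ z (t.1, t.2.1, j)) t.2.2.castSucc) (z t) := by
  rw [enorm_pow_mul_sq_eq_sum, Fintype.sum_pow,
    ← ((Equiv.curry (Fin m) (Fin 2 × Fin a) V).trans
      (Equiv.arrowCongr (.refl _) (Equiv.curry (Fin 2) (Fin a) V))).sum_comp]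
  refine sum_congr rfl fun z _ ↦ ?_
  simp_rw [prod_mul_distrib, Fintype.prod_prod_type]
  rfl

end RowNorms

section Moments

variable {Ω : Type*} [MeasurableSpace Ω] {P : Measure Ω}

lemma abs_integral_pow_le_integral_sq [IsFiniteMeasure P] {X : Ω → ℝ} (hX : Measurable X)
    (hX_le : ∀ᵐ ω ∂P, |X ω| ≤ 1) {m : ℕ} (hm : 2 ≤ m) :
    |∫ ω, X ω ^ m ∂P| ≤ ∫ ω, X ω ^ 2 ∂P := by
  have pow_le : ∀ᵐ ω ∂P, |X ω ^ m| ≤ X ω ^ 2 := by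
    filter_upwards [hX_le] with ω hω
    rw [abs_pow, ← sq_abs]
    exact pow_le_pow_of_le_one (abs_nonneg _) hω hm
  have sq_integrable : Integrable (fun ω ↦ X ω ^ 2) P := by
    refine Integrable.of_bound (hX.pow_const 2).aestronglyMeasurable 1 ?_
    filter_upwards [hX_le] with ω hω
    rw [Real.norm_eq_abs, abs_pow]
    exact pow_le_one₀ (abs_nonneg _) hω
  refine abs_integral_le_integral_abs.trans (integral_mono_ae ?_ sq_integrable pow_le)
  exact (sq_integrable.mono' (hX.pow_const m).aestronglyMeasurable pow_le).abs

lemma abs_integral_prod_comp_le {ι T : Type*} [Fintype ι] [Finite T] [DecidableEq T]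
    {Y : T → Ω → ℝ} (hind : iIndepFun Y P) (hmeas : ∀ t, Measurable (Y t)) {p : ℝ} (hp : 0 ≤ p)
    (hmean : ∀ t, ∫ ω, Y t ω ∂P = 0) (hmom : ∀ t m, 2 ≤ m → |∫ ω, Y t ω ^ m ∂P| ≤ p)
    (f : ι → T) :
    |∫ ω, ∏ i, Y (f i) ω ∂P| ≤
      if 2 * #(univ.image f) ≤ Fintype.card ι then p ^ #(univ.image f) else 0 := by
  have := Fintype.ofFinite T
  have := hind.isProbabilityMeasure
  let mult (t : T) : ℕ := #{i | f i = t}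
  have factor : ∫ ω, ∏ i, Y (f i) ω ∂P = ∏ t, ∫ ω, Y t ω ^ mult t ∂P := by
    rw [← hind.integral_fun_prod_comp (f := fun t z ↦ z ^ mult t)
      (fun t ↦ (hmeas t).aemeasurable) fun t ↦ by fun_prop]
    refine integral_congr_ae (.of_forall fun ω ↦ ?_)
    dsimp only
    rw [← prod_fiberwise' univ f fun t ↦ Y t ω]
    simp [mult]
  by_cases hsingle : ∃ t, mult t = 1
  · obtain ⟨t, ht⟩ := hsingle
    rw [factor, prod_eq_zero (mem_univ t) (by simp [ht, hmean]), abs_zero]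
    positivity
  have mult_eq_zero {t} (ht : t ∉ univ.image f) : mult t = 0 := by
    simpa [mult, filter_eq_empty_iff] using ht
  have two_le_mult : ∀ t ∈ univ.image f, 2 ≤ mult t := by
    intro t ht
    obtain ⟨i, -, hi⟩ := mem_image.mp ht
    have : 0 < mult t := card_pos.mpr ⟨i, by simpa using hi⟩
    have : mult t ≠ 1 := fun h ↦ hsingle ⟨t, h⟩
    omega
  rw [← Finset.card_univ, if_pos (mul_card_image_le_card univ 2 two_le_mult), factor, abs_prod,
    ← prod_const, ← prod_subset (subset_univ (univ.image f)) fun t _ ht ↦ by simp [mult_eq_zero ht]]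
  exact prod_le_prod (fun _ _ ↦ abs_nonneg _) fun t ht ↦ hmom t _ (two_le_mult t ht)

lemma measure_lt_le_of_integral_pow_le [IsFiniteMeasure P] {X : Ω → ℝ} (hX : ∀ ω, 0 ≤ X ω)
    {T C : ℝ} (hT : 0 < T) {m : ℕ} (hint : Integrable (fun ω ↦ X ω ^ m) P)
    (hC : ∫ ω, X ω ^ m ∂P ≤ C) :
    P {ω | T < X ω} ≤ ENNReal.ofReal (C / T ^ m) := by
  have hsub : {ω | T < X ω} ⊆ {ω | T ^ m ≤ X ω ^ m} := fun ω hω ↦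
    pow_le_pow_left₀ hT.le hω.le m
  refine (measure_mono hsub).trans ?_
  rw [← ofReal_measureReal]
  refine ENNReal.ofReal_le_ofReal ((le_div_iff₀' (pow_pos hT m)).mpr (le_trans ?_ hC))
  exact mul_meas_ge_le_integral_of_nonneg (.of_forall fun ω ↦ pow_nonneg (hX ω) m) hint _

end Moments

section Tail

/-- The scale `50 log N √(N p)`: with high probability the rows of the `a`-th power of an `N × N`
random matrix with entries of variance at most `p` have norm at most the `a`-th power of it. -/
noncomputable def rowScale (N : ℕ) (p : ℝ) : ℝ := 50 * Real.log N * √(N * p)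

lemma rowScale_nonneg (N : ℕ) (p : ℝ) : 0 ≤ rowScale N p := by
  unfold rowScale
  positivity

lemma rowScale_sq {p : ℝ} (hp : 0 ≤ p) (N : ℕ) :
    rowScale N p ^ 2 = (50 * Real.log N) ^ 2 * (N * p) := by
  rw [rowScale, mul_pow, Real.sq_sqrt (by positivity)]

lemma pow_mul_pow_div_rowScale_le {N h : ℕ} {p : ℝ} (hNp : 0 < N * p)
    (hlog : 0 < Real.log N) (hh : Real.log N ≤ h) (hh' : h + 1 ≤ 4 * Real.log N) :
    (N * p) ^ h * (h + 1) ^ (2 * h + 1) / ((50 * Real.log N) ^ 2 * (N * p)) ^ h ≤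
      4 * Real.log N / N ^ 5 := by
  have hN : (0 : ℝ) < N := by
    have : N ≠ 0 := by rintro rfl; simp at hlog
    positivity
  have exp_five_le : Real.exp 5 ≤ 150 := by
    calc Real.exp 5 = Real.exp 1 ^ 5 := by rw [← Real.exp_nat_mul]; norm_num
      _ ≤ 2.7182818286 ^ 5 := by gcongr; exact Real.exp_one_lt_d9.le
      _ ≤ 150 := by norm_num
  have N_pow_le : (N : ℝ) ^ 5 ≤ 150 ^ h := by
    calc (N : ℝ) ^ 5 = Real.exp (5 * Real.log N) := by
          rw [mul_comm, Real.exp_mul, Real.exp_log hN]; norm_cast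
      _ ≤ Real.exp (5 * h) := by gcongr
      _ = Real.exp 5 ^ h := by rw [mul_comm, Real.exp_nat_mul]
      _ ≤ _ := by gcongr
  set l := Real.log N
  rw [div_le_div_iff₀ (by positivity) (by positivity)]
  calc (N * p) ^ h * (h + 1) ^ (2 * h + 1) * N ^ 5
      ≤ (N * p) ^ h * (4 * l) ^ (2 * h + 1) * 150 ^ h := by gcongr
    _ = 4 * l * ((4 * l) ^ 2 * 150 * (N * p)) ^ h := by
        rw [mul_pow _ (N * p : ℝ), mul_pow _ (150 : ℝ), ← pow_mul, pow_succ]; ring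
    _ ≤ 4 * l * ((50 * l) ^ 2 * (N * p)) ^ h := by
        gcongr
        nlinarith [sq_nonneg l]

end Tail

section Wigner

variable {Ω V : Type*} [MeasurableSpace Ω]

/-- A random symmetric matrix whose entries on and above the diagonal are independent, centred,
bounded by `1` in absolute value, and of variance at most `p`. -/
structure IsBoundedWigner [LE V] (P : Measure Ω) (p : ℝ) (E : Ω → Matrix V V ℝ) : Prop where
  isSymm : ∀ ω, (E ω).IsSymm
  measurable : ∀ u v, Measurable fun ω ↦ E ω u v
  indep : iIndepFun (fun (e : {e : V × V // e.1 ≤ e.2}) ω ↦ E ω e.1.1 e.1.2) P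
  integral_eq_zero : ∀ u v, ∫ ω, E ω u v ∂P = 0
  integral_sq_le : ∀ u v, ∫ ω, E ω u v ^ 2 ∂P ≤ p
  abs_le_one : ∀ u v, ∀ᵐ ω ∂P, |E ω u v| ≤ 1

namespace IsBoundedWigner

variable [LinearOrder V] {P : Measure Ω} {p : ℝ} {E : Ω → Matrix V V ℝ}

lemma isProbabilityMeasure (hE : IsBoundedWigner P p E) : IsProbabilityMeasure P :=
  hE.indep.isProbabilityMeasure

lemma integrable_prod {ι : Type*} [Fintype ι] (hE : IsBoundedWigner P p E) (src tgt : ι → V) :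
    Integrable (fun ω ↦ ∏ i, E ω (src i) (tgt i)) P := by
  have := hE.isProbabilityMeasure
  refine Integrable.of_bound
    (Finset.measurable_prod _ fun i _ ↦ hE.measurable _ _).aestronglyMeasurable 1 ?_
  filter_upwards [ae_all_iff.mpr fun i ↦ hE.abs_le_one (src i) (tgt i)] with ω hω
  rw [Real.norm_eq_abs, abs_prod]
  exact prod_le_one (fun _ _ ↦ abs_nonneg _) fun i _ ↦ hω i

lemma iIndepFun_sym2 (hE : IsBoundedWigner P p E) :
    iIndepFun (fun (e : Sym2 V) ω ↦ E ω e.inf e.sup) P :=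
  hE.indep.precomp Sym2.sortEquiv.injective

lemma apply_inf_sup (hE : IsBoundedWigner P p E) (ω : Ω) (u v : V) :
    E ω s(u, v).inf s(u, v).sup = E ω u v := by
  rcases le_total u v with h | h
  · simp [h]
  · simp [h, (hE.isSymm ω).apply]

lemma abs_integral_prod_le [Finite V] {ι : Type*} [Fintype ι] (hE : IsBoundedWigner P p E)
    (hp : 0 ≤ p) (src tgt : ι → V) :
    |∫ ω, ∏ i, E ω (src i) (tgt i) ∂P| ≤
      if 2 * #(univ.image fun i ↦ s(src i, tgt i)) ≤ Fintype.card ι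
        then p ^ #(univ.image fun i ↦ s(src i, tgt i)) else 0 := by
  have := hE.isProbabilityMeasure
  have := abs_integral_prod_comp_le hE.iIndepFun_sym2 (fun _ ↦ hE.measurable _ _) hp
    (fun _ ↦ hE.integral_eq_zero _ _)
    (fun e m hm ↦ (abs_integral_pow_le_integral_sq (hE.measurable _ _)
      (hE.abs_le_one e.inf e.sup) hm).trans (hE.integral_sq_le _ _))
    fun i ↦ s(src i, tgt i)
  simpa only [hE.apply_inf_sup] using this

lemma sum_abs_integral_prod_le [Fintype V] {ι : Type*} [Fintype ι] [DecidableEq ι]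
    (hE : IsBoundedWigner P p E) (hp : 0 ≤ p) (hp_one : p ≤ 1) (hVp : 1 ≤ Fintype.card V * p)
    {h : ℕ} (hι : Fintype.card ι = 2 * h) {rank : ι → ℕ} {root : V} {src : (ι → V) → ι → V}
    (hsrc : ∀ x i, src x i = root ∨ ∃ j, rank j < rank i ∧ src x i = x j) :
    ∑ x : ι → V, |∫ ω, ∏ i, E ω (src x i) (x i) ∂P| ≤
      (Fintype.card V * p) ^ h * (h + 1) ^ (2 * h + 1) := by
  rw [← hι]
  refine le_trans ?_ (sum_pow_card_image_erase_le hp hVp root h)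
  rw [sum_filter]
  refine sum_le_sum fun x _ ↦ (hE.abs_integral_prod_le hp _ _).trans ?_
  have vertices_le := card_erase_root_le_card_edges (hsrc x)
  split_ifs
  · exact pow_le_pow_of_le_one hp hp_one vertices_le
  · omega
  · positivity
  · rfl

variable [Fintype V] {κ : Type*} [Fintype κ] {B : Matrix V κ ℝ}

lemma integrable_enorm_pow (hE : IsBoundedWigner P p E) (B : Matrix V κ ℝ) (a : ℕ) (u : V)
    (m : ℕ) : Integrable (fun ω ↦ (enorm ((E ω ^ a * B) u) ^ 2) ^ m) P := by
  simp_rw [enorm_pow_mul_sq_pow_eq_sum]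
  exact integrable_finsetSum _ fun z _ ↦ (hE.integrable_prod _ _).const_mul _

lemma integral_enorm_pow_le (hE : IsBoundedWigner P p E) (hp : 0 ≤ p) (hp_one : p ≤ 1)
    (hVp : 1 ≤ Fintype.card V * p) (hB : ∀ v, enorm (B v) ≤ 1) (a : ℕ) (u : V) (m : ℕ) :
    ∫ ω, (enorm ((E ω ^ a * B) u) ^ 2) ^ m ∂P ≤
      (Fintype.card V * p) ^ (a * m) * ((a * m : ℕ) + 1) ^ (2 * (a * m) + 1) := by
  simp_rw [enorm_pow_mul_sq_pow_eq_sum]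
  rw [integral_finsetSum _ fun z _ ↦ (hE.integrable_prod _ _).const_mul _]
  refine le_trans (sum_le_sum fun z _ ↦ ?_) (hE.sum_abs_integral_prod_le hp hp_one hVp
    (ι := Fin m × Fin 2 × Fin a) (by simp; ring) (rank := fun t ↦ t.2.2) (root := u)
    (src := fun z t ↦ walk u (fun i ↦ z (t.1, t.2.1, i)) t.2.2.castSucc) ?_)
  · rw [integral_const_mul]
    refine (le_abs_self _).trans ?_
    rw [abs_mul, abs_prod]
    exact mul_le_of_le_one_left (abs_nonneg _) <| prod_le_one (fun _ _ ↦ abs_nonneg _) fun l _ ↦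
      (abs_dotProduct_le_enorm_mul_enorm _ _).trans
        (mul_le_one₀ (hB _) (enorm_nonneg _) (hB _))
  · rintro x ⟨l, b, j⟩
    obtain h | ⟨i, hij, h⟩ := walk_castSucc_eq u (fun i ↦ x (l, b, i)) j
    exacts [.inl h, .inr ⟨(l, b, i), hij, h⟩]

theorem measure_lt_enorm_le (hE : IsBoundedWigner P p E) (hp_one : p ≤ 1)
    (hVp : 1 ≤ Fintype.card V * p) (hB : ∀ v, enorm (B v) ≤ 1)
    (hlog : 4 ≤ Real.log (Fintype.card V)) {a : ℕ} (ha : a ≠ 0)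
    (ha' : a ≤ 2 * Real.log (Fintype.card V) + 2) (u : V) :
    P {ω | rowScale (Fintype.card V) p ^ a < enorm ((E ω ^ a * B) u)} ≤
      ENNReal.ofReal (4 * Real.log (Fintype.card V) / Fintype.card V ^ 5) := by
  have := hE.isProbabilityMeasure
  have hp : 0 ≤ p := (integral_nonneg fun _ ↦ sq_nonneg _).trans (hE.integral_sq_le u u)
  set N := Fintype.card V
  set l := Real.log N
  set m := ⌈l / a⌉₊
  have ha_pos : (0 : ℝ) < a := by positivity
  have le_am : l ≤ (a * m : ℕ) := by
    push_cast
    exact (div_le_iff₀' ha_pos).mp (Nat.le_ceil _)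
  have am_le : (a * m : ℕ) + 1 ≤ 4 * l := by
    have : a * (m : ℝ) ≤ a * (l / a + 1) := by
      gcongr; exact (Nat.ceil_lt_add_one (by positivity)).le
    rw [mul_add, mul_div_cancel₀ _ ha_pos.ne'] at this
    push_cast
    linarith
  have hT : 0 < (50 * l) ^ 2 * (N * p) := by positivity
  calc P {ω | rowScale N p ^ a < enorm ((E ω ^ a * B) u)}
      ≤ P {ω | ((50 * l) ^ 2 * (N * p)) ^ a < enorm ((E ω ^ a * B) u) ^ 2} := by
        refine measure_mono fun ω hω ↦ ?_
        rw [Set.mem_ofPred_eq, ← rowScale_sq hp, ← pow_mul, mul_comm, pow_mul]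
        exact pow_lt_pow_left₀ hω (pow_nonneg (rowScale_nonneg N p) a) two_ne_zero
    _ ≤ ENNReal.ofReal ((N * p) ^ (a * m) * ((a * m : ℕ) + 1) ^ (2 * (a * m) + 1) /
          (((50 * l) ^ 2 * (N * p)) ^ a) ^ m) :=
        measure_lt_le_of_integral_pow_le (fun _ ↦ sq_nonneg _) (pow_pos hT a)
          (hE.integrable_enorm_pow B a u m) (hE.integral_enorm_pow_le hp hp_one hVp hB a u m)
    _ ≤ ENNReal.ofReal (4 * l / N ^ 5) := by
        rw [← pow_mul]
        exact ENNReal.ofReal_le_ofReal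
          (pow_mul_pow_div_rowScale_le (by positivity) (by positivity) le_am am_le)

end IsBoundedWigner

end Wigner

section Noise

variable {n k : ℕ} {p q : ℝ} {cl : Fin n → Fin k}

lemma meanMatrix_mem_Icc (hq : 0 ≤ q) (hqp : q ≤ p) (cl : Fin n → Fin k) (u v : Fin n) :
    meanMatrix n k p q cl u v ∈ Set.Icc 0 p := by
  rw [meanMatrix, of_apply]
  split_ifs
  exacts [⟨hq.trans hqp, le_rfl⟩, ⟨hq, hqp⟩]

namespace NoiseModel

variable {Ω : Type*} [MeasureSpace Ω] {E : Ω → Matrix (Fin n) (Fin n) ℝ}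

lemma integral_comp (hE : NoiseModel p q cl E) {u v : Fin n} (huv : u ≤ v)
    (hG : meanMatrix n k p q cl u v ∈ Set.Icc 0 1) {f : ℝ → ℝ} (hf : Measurable f) :
    ∫ ω, f (E ω u v) =
      meanMatrix n k p q cl u v * f (1 - meanMatrix n k p q cl u v) +
      (1 - meanMatrix n k p q cl u v) * f (-meanMatrix n k p q cl u v) := by
  obtain ⟨-, meas, -, map_eq⟩ := hE
  have integrable_smul_dirac (c x : ℝ) : Integrable f (ENNReal.ofReal c • Measure.dirac x) :=
    (integrable_dirac (by simp)).smul_measure ENNReal.ofReal_ne_top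
  rw [← integral_map (meas u v).aemeasurable hf.aestronglyMeasurable, map_eq u v huv,
    integral_add_measure (integrable_smul_dirac _ _) (integrable_smul_dirac _ _),
    integral_smul_measure, integral_smul_measure, integral_dirac, integral_dirac,
    ENNReal.toReal_ofReal hG.1, ENNReal.toReal_ofReal (sub_nonneg.mpr hG.2), smul_eq_mul,
    smul_eq_mul]

lemma ae_abs_le_one (hE : NoiseModel p q cl E) {u v : Fin n} (huv : u ≤ v)
    (hG : meanMatrix n k p q cl u v ∈ Set.Icc 0 1) : ∀ᵐ ω, |E ω u v| ≤ 1 := by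
  obtain ⟨-, meas, -, map_eq⟩ := hE
  have ball_meas : MeasurableSet {z : ℝ | |z| ≤ 1} := measurableSet_le (by fun_prop) (by fun_prop)
  refine (ae_map_iff (meas u v).aemeasurable ball_meas).mp ?_
  rw [map_eq u v huv, ae_add_measure_iff]
  constructor <;> refine Measure.ae_smul_measure ((ae_dirac_iff ball_meas).mpr ?_) _ <;>
    rw [abs_le] <;> constructor <;> linarith [hG.1, hG.2]

theorem isBoundedWigner (hE : NoiseModel p q cl E) (hq : 0 ≤ q) (hqp : q ≤ p) (hp : p ≤ 1) :
    IsBoundedWigner ℙ p E := by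
  have mean_mem (u v : Fin n) : meanMatrix n k p q cl u v ∈ Set.Icc 0 1 :=
    Set.Icc_subset_Icc_right hp (meanMatrix_mem_Icc hq hqp cl u v)
  refine ⟨hE.1, hE.2.1, hE.2.2.1, fun u v ↦ ?_, fun u v ↦ ?_, fun u v ↦ ?_⟩
  · wlog huv : u ≤ v generalizing u v
    · simpa only [(hE.1 _).apply v u] using this v u (le_of_not_ge huv)
    rw [hE.integral_comp huv (mean_mem u v) measurable_id', mul_neg, mul_comm, add_neg_cancel]
  · wlog huv : u ≤ v generalizing u v
    · simpa only [(hE.1 _).apply v u] using this v u (le_of_not_ge huv)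
    rw [hE.integral_comp huv (mean_mem u v) (measurable_id'.pow_const 2)]
    nlinarith [(meanMatrix_mem_Icc hq hqp cl u v).2, sq_nonneg (meanMatrix n k p q cl u v)]
  · wlog huv : u ≤ v generalizing u v
    · simpa only [(hE.1 _).apply v u] using this v u (le_of_not_ge huv)
    exact hE.ae_abs_le_one huv (mean_mem u v)

end NoiseModel

end Noise

section OperatorNorm

open scoped Matrix.Norms.L2Operator

lemma norm_pow_mul_le {A : Type*} [SeminormedRing A] (x y : A) (t : ℕ) :
    ‖x ^ t * y‖ ≤ ‖x‖ ^ t * ‖y‖ := by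
  induction t with
  | zero => simp
  | succ t ih =>
    rw [pow_succ', pow_succ', mul_assoc, mul_assoc]
    exact (norm_mul_le _ _).trans (by gcongr)

lemma norm_pow_le_norm_pow_of_isSelfAdjoint {A : Type*} [NormedRing A] [StarRing A] [CStarRing A]
    {x : A} (hx : IsSelfAdjoint x) {a : ℕ} (ha : a ≠ 0) : ‖x‖ ^ a ≤ ‖x ^ a‖ := by
  rcases (norm_nonneg x).eq_or_lt with h | h
  · simp [← h, ha]
  have split : 2 ^ a - a + a = 2 ^ a := Nat.sub_add_cancel Nat.lt_two_pow_self.le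
  refine le_of_mul_le_mul_left ?_ (pow_pos h (2 ^ a - a))
  calc ‖x‖ ^ (2 ^ a - a) * ‖x‖ ^ a = ‖x ^ (2 ^ a)‖ := by
        rw [← pow_add, split, hx.norm_pow_two_pow]
    _ = ‖x ^ (2 ^ a - a) * x ^ a‖ := by rw [← pow_add, split]
    _ ≤ ‖x‖ ^ (2 ^ a - a) * ‖x ^ a‖ := norm_pow_mul_le _ _ _

variable {V κ ν : Type*} [Fintype κ]

lemma enorm_add_le (x y : κ → ℝ) : enorm (x + y) ≤ enorm x + enorm y := by
  simp only [enorm_eq_norm_toLp, WithLp.toLp_add]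
  exact norm_add_le _ _

lemma enorm_smul (c : ℝ) (x : κ → ℝ) : enorm (c • x) = |c| * enorm x := by
  simp only [enorm_eq_norm_toLp, WithLp.toLp_smul, norm_smul, Real.norm_eq_abs]

lemma enorm_sum_le {ι : Type*} (s : Finset ι) (x : ι → κ → ℝ) :
    enorm (∑ t ∈ s, x t) ≤ ∑ t ∈ s, enorm (x t) := by
  simp only [enorm_eq_norm_toLp, WithLp.toLp_sum]
  exact norm_sum_le _ _

lemma norm_transpose [DecidableEq κ] [Fintype ν] [DecidableEq ν] (A : Matrix ν κ ℝ) :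
    ‖Aᵀ‖ = ‖A‖ := by
  simpa using Matrix.l2_opNorm_conjTranspose A

lemma norm_transpose_mul_self [DecidableEq κ] [Fintype ν] (A : Matrix ν κ ℝ) :
    ‖Aᵀ * A‖ = ‖A‖ ^ 2 := by
  classical
  rw [← conjTranspose_eq_transpose_of_trivial, Matrix.l2_opNorm_conjTranspose_mul_self, pow_two]

lemma enorm_mulVec_le [DecidableEq κ] [Fintype ν] (A : Matrix ν κ ℝ) (x : κ → ℝ) :
    enorm (A *ᵥ x) ≤ ‖A‖ * enorm x := by
  rw [enorm_eq_norm_toLp, enorm_eq_norm_toLp]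
  exact Matrix.l2_opNorm_mulVec A (WithLp.toLp 2 x)

lemma dotProduct_self_eq_enorm_sq (x : κ → ℝ) : x ⬝ᵥ x = enorm x ^ 2 := by
  simp only [enorm_sq, dotProduct, ← pow_two]

lemma dotProduct_mulVec_self_le [DecidableEq κ] (A : Matrix κ κ ℝ) (x : κ → ℝ) :
    x ⬝ᵥ (A *ᵥ x) ≤ ‖A‖ * (x ⬝ᵥ x) :=
  calc x ⬝ᵥ (A *ᵥ x) ≤ enorm x * enorm (A *ᵥ x) :=
        (le_abs_self _).trans (abs_dotProduct_le_enorm_mul_enorm _ _)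
    _ ≤ enorm x * (‖A‖ * enorm x) :=
        mul_le_mul_of_nonneg_left (enorm_mulVec_le A x) (enorm_nonneg x)
    _ = ‖A‖ * (x ⬝ᵥ x) := by rw [dotProduct_self_eq_enorm_sq]; ring

lemma enorm_mul_row_le [DecidableEq κ] [Fintype ν] (A : Matrix V ν ℝ) (B : Matrix ν κ ℝ) (u : V) :
    enorm ((A * B) u) ≤ enorm (A u) * ‖B‖ := by
  classical
  have row_eq : (A * B) u = Bᵀ *ᵥ A u := by rw [mulVec_transpose]; rfl
  rw [row_eq, ← norm_transpose, mul_comm]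
  exact enorm_mulVec_le Bᵀ (A u)

variable [Fintype V]

lemma l2_opNorm_sq_le_sum_enorm_sq [DecidableEq κ] (A : Matrix V κ ℝ) :
    ‖A‖ ^ 2 ≤ ∑ u, enorm (A u) ^ 2 := by
  rw [← Real.le_sqrt (norm_nonneg _) (by positivity), Matrix.l2_opNorm_def]
  refine ContinuousLinearMap.opNorm_le_bound _ (Real.sqrt_nonneg _) fun x ↦ ?_
  rw [EuclideanSpace.norm_eq, EuclideanSpace.norm_eq, ← Real.sqrt_mul (by positivity), sum_mul]
  refine Real.sqrt_le_sqrt (sum_le_sum fun u _ ↦ ?_)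
  simpa [enorm_sq, mulVec, dotProduct] using sum_mul_sq_le_sq_mul_sq univ (A u) x.ofLp

variable [DecidableEq V] {M : Matrix V V ℝ}

lemma norm_le_two_mul_of_enorm_pow_le (hM : M.IsSymm) {r : ℕ} (hr : r ≠ 0)
    (hV : Fintype.card V ≤ 4 ^ r) {τ : ℝ} (hτ : 0 ≤ τ)
    (hrows : ∀ u, enorm ((M ^ r) u) ≤ τ ^ r) : ‖M‖ ≤ 2 * τ := by
  have hM_adj : IsSelfAdjoint M := by
    simpa [isSelfAdjoint_iff, star_eq_conjTranspose] using hM.eq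
  refine le_of_pow_le_pow_left₀ hr (by positivity)
    ((norm_pow_le_norm_pow_of_isSelfAdjoint hM_adj hr).trans ?_)
  refine le_of_pow_le_pow_left₀ two_ne_zero (by positivity) ?_
  calc ‖M ^ r‖ ^ 2 ≤ ∑ u, enorm ((M ^ r) u) ^ 2 := l2_opNorm_sq_le_sum_enorm_sq _
    _ ≤ ∑ _u : V, (τ ^ r) ^ 2 :=
        sum_le_sum fun u _ ↦ pow_le_pow_left₀ (enorm_nonneg _) (hrows u) 2
    _ = Fintype.card V * (τ ^ r) ^ 2 := by simp
    _ ≤ 4 ^ r * (τ ^ r) ^ 2 := by gcongr; exact_mod_cast hV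
    _ = ((2 * τ) ^ r) ^ 2 := by
        rw [mul_pow, mul_pow, pow_right_comm (2 : ℝ)]; norm_num

end OperatorNorm

section Perturbation

open scoped Matrix.Norms.L2Operator

variable {n : ℕ} {lam μ τ : ℝ} {G E Pr : Matrix (Fin n) (Fin n) ℝ}

lemma psiM_add_sub_psiM (lam μ : ℝ) (G E : Matrix (Fin n) (Fin n) ℝ) :
    psiM lam μ (G + E) - psiM lam μ G =
      (-(1 / (lam * μ))) • (G * E + E * G + E * E) + (1 / lam + 1 / μ) • E := by
  unfold psiM
  rw [show (G + E) * (G + E) = G * G + (G * E + E * G + E * E) by noncomm_ring]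
  module

lemma psi_coeff_le (hμ : 0 < μ) (hlam : μ ≤ lam) (hτ : 0 ≤ τ) (hτμ : τ ≤ μ) (c : ℝ) :
    1 / (lam * μ) * (c * τ * lam + τ ^ 2) + (1 / lam + 1 / μ) * τ ≤ (c + 3) * (τ / μ) := by
  have hlam_pos : 0 < lam := hμ.trans_le hlam
  calc _ = c * (τ / μ) + τ / μ * (τ / lam) + τ / lam + τ / μ := by field_simp; ring
    _ ≤ c * (τ / μ) + τ / μ * 1 + τ / μ + τ / μ := by
        gcongr; exact (div_le_one hlam_pos).mpr (hτμ.trans hlam)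
    _ = _ := by ring

lemma norm_psiM_add_sub_le (hμ : 0 < μ) (hlam : μ ≤ lam) (hτμ : 2 * τ ≤ μ) (hG : ‖G‖ ≤ lam)
    (hE : ‖E‖ ≤ 2 * τ) : ‖psiM lam μ (G + E) - psiM lam μ G‖ ≤ 10 * (τ / μ) := by
  have hlam_pos : 0 < lam := hμ.trans_le hlam
  have hτ : 0 ≤ 2 * τ := (norm_nonneg E).trans hE
  have quadratic_le : ‖G * E + E * G + E * E‖ ≤ 2 * (2 * τ) * lam + (2 * τ) ^ 2 := by
    calc ‖G * E + E * G + E * E‖ ≤ ‖G‖ * ‖E‖ + ‖E‖ * ‖G‖ + ‖E‖ * ‖E‖ :=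
          norm_add₃_le.trans <| by gcongr <;> exact norm_mul_le _ _
      _ ≤ lam * (2 * τ) + 2 * τ * lam + 2 * τ * (2 * τ) := by gcongr
      _ = _ := by ring
  calc ‖psiM lam μ (G + E) - psiM lam μ G‖
      ≤ 1 / (lam * μ) * ‖G * E + E * G + E * E‖ + (1 / lam + 1 / μ) * ‖E‖ := by
        rw [psiM_add_sub_psiM]
        refine (norm_add_le _ _).trans_eq ?_
        rw [norm_smul, norm_smul, norm_neg, Real.norm_of_nonneg (by positivity),
          Real.norm_of_nonneg (by positivity)]
    _ ≤ 1 / (lam * μ) * (2 * (2 * τ) * lam + (2 * τ) ^ 2) + (1 / lam + 1 / μ) * (2 * τ) := by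
        gcongr
    _ ≤ (2 + 3) * (2 * τ / μ) := psi_coeff_le hμ hlam hτ hτμ 2
    _ = 10 * (τ / μ) := by ring

lemma enorm_pow_mul_psiM_sub_mul_le (hμ : 0 < μ) (hlam : 0 < lam) (hPr : Pr * G = G) (a : ℕ)
    (Z : Matrix (Fin n) (Fin n) ℝ) (u : Fin n) :
    enorm ((E ^ a * ((psiM lam μ (G + E) - psiM lam μ G) * Z)) u) ≤
      1 / (lam * μ) * (enorm ((E ^ a * Pr) u) * ‖G * E * Z‖ +
        enorm ((E ^ (a + 1) * Pr) u) * ‖G * Z‖ + enorm ((E ^ (a + 2) * Z) u)) +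
      (1 / lam + 1 / μ) * enorm ((E ^ (a + 1) * Z) u) := by
  have project (b : ℕ) (Y) : E ^ b * Pr * (G * Y) = E ^ b * (G * Y) := by
    rw [Matrix.mul_assoc, ← Matrix.mul_assoc Pr, hPr]
  have expand : E ^ a * ((psiM lam μ (G + E) - psiM lam μ G) * Z) =
      (-(1 / (lam * μ))) • (E ^ a * Pr * (G * E * Z) + E ^ (a + 1) * Pr * (G * Z) +
        E ^ (a + 2) * Z) + (1 / lam + 1 / μ) • (E ^ (a + 1) * Z) := by
    rw [psiM_add_sub_psiM, Matrix.mul_assoc G, project, project]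
    simp only [pow_succ, Matrix.add_mul, Matrix.mul_add, Matrix.smul_mul, Matrix.mul_smul,
      Matrix.mul_assoc]
  rw [expand]
  refine (enorm_add_le _ _).trans (add_le_add ?_ ?_)
  · refine (enorm_smul _ _).trans_le ?_
    rw [abs_neg, abs_of_pos (by positivity)]
    gcongr
    refine (enorm_add_le _ _).trans (add_le_add ((enorm_add_le _ _).trans ?_) le_rfl)
    exact add_le_add (enorm_mul_row_le _ _ _) (enorm_mul_row_le _ _ _)
  · refine (enorm_smul _ _).trans_le ?_
    rw [abs_of_pos (by positivity)]

lemma enorm_pow_mul_psiM_sub_mul_le_of_rows (hμ : 0 < μ) (hlam : μ ≤ lam) (hτμ : τ ≤ μ)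
    (hG : ‖G‖ ≤ lam) (hE : ‖E‖ ≤ 2 * τ) (hPr : Pr * G = G) {β w : ℝ} {a : ℕ} {u : Fin n}
    {Z : Matrix (Fin n) (Fin n) ℝ} (hβ : 0 ≤ β) (hZ : ‖Z‖ ≤ w)
    (hPr_zero : enorm ((E ^ a * Pr) u) ≤ β * τ ^ a)
    (hPr_one : enorm ((E ^ (a + 1) * Pr) u) ≤ β * τ ^ (a + 1))
    (hZ_one : enorm ((E ^ (a + 1) * Z) u) ≤ β * τ ^ (a + 1) * w)
    (hZ_two : enorm ((E ^ (a + 2) * Z) u) ≤ β * τ ^ (a + 2) * w) :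
    enorm ((E ^ a * ((psiM lam μ (G + E) - psiM lam μ G) * Z)) u) ≤
      β * τ ^ a * (10 * (τ / μ) * w) := by
  have hlam_pos : 0 < lam := hμ.trans_le hlam
  have hτ : 0 ≤ τ := by linarith [(norm_nonneg E).trans hE]
  have hw : 0 ≤ w := (norm_nonneg Z).trans hZ
  have hGE : ‖G * E‖ ≤ lam * (2 * τ) := (norm_mul_le _ _).trans (by gcongr)
  have hGEZ : ‖G * E * Z‖ ≤ lam * (2 * τ) * w := (norm_mul_le _ _).trans (by gcongr)
  have hGZ : ‖G * Z‖ ≤ lam * w := (norm_mul_le _ _).trans (by gcongr)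
  calc _ ≤ 1 / (lam * μ) * (enorm ((E ^ a * Pr) u) * ‖G * E * Z‖ +
          enorm ((E ^ (a + 1) * Pr) u) * ‖G * Z‖ + enorm ((E ^ (a + 2) * Z) u)) +
        (1 / lam + 1 / μ) * enorm ((E ^ (a + 1) * Z) u) :=
        enorm_pow_mul_psiM_sub_mul_le hμ hlam_pos hPr a Z u
    _ ≤ 1 / (lam * μ) * (β * τ ^ a * (lam * (2 * τ) * w) + β * τ ^ (a + 1) * (lam * w) +
          β * τ ^ (a + 2) * w) + (1 / lam + 1 / μ) * (β * τ ^ (a + 1) * w) := by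
        gcongr
    _ = β * τ ^ a * w *
        (1 / (lam * μ) * (3 * τ * lam + τ ^ 2) + (1 / lam + 1 / μ) * τ) := by ring
    _ ≤ β * τ ^ a * w * ((3 + 3) * (τ / μ)) := by
        gcongr
        exact psi_coeff_le hμ hlam hτ hτμ 3
    _ = β * τ ^ a * (6 * (τ / μ) * w) := by ring
    _ ≤ β * τ ^ a * (10 * (τ / μ) * w) := by gcongr; norm_num

theorem enorm_pow_mul_psiM_sub_pow_mul_le (hμ : 0 < μ) (hlam : μ ≤ lam) (hτμ : 2 * τ ≤ μ)
    (hG : ‖G‖ ≤ lam) (hE : ‖E‖ ≤ 2 * τ) (hPr : Pr * G = G) {β : ℝ} {R : ℕ} {u : Fin n}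
    (hrow : ∀ a ≤ R, enorm ((E ^ a * Pr) u) ≤ β * τ ^ a) (t : ℕ) {a : ℕ} (ha : a + 2 * t ≤ R) :
    enorm ((E ^ a * ((psiM lam μ (G + E) - psiM lam μ G) ^ t * psiM lam μ G)) u) ≤
      β * τ ^ a * ((10 * (τ / μ)) ^ t * ‖psiM lam μ G‖) := by
  have : 0 ≤ τ := by linarith [(norm_nonneg E).trans hE]
  have hβ : 0 ≤ β := by simpa using (enorm_nonneg _).trans (hrow 0 (Nat.zero_le R))
  induction t generalizing a with
  | zero =>
    have hPr_psi : Pr * psiM lam μ G = psiM lam μ G := by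
      simp only [psiM, Matrix.mul_add, Matrix.mul_smul, ← Matrix.mul_assoc, hPr]
    rw [pow_zero, Matrix.one_mul, ← hPr_psi, ← Matrix.mul_assoc, hPr_psi, pow_zero, one_mul]
    refine (enorm_mul_row_le _ _ _).trans ?_
    gcongr
    exact hrow a (by omega)
  | succ t ih =>
    rw [pow_succ', Matrix.mul_assoc _ _ (psiM lam μ G), pow_succ' (10 * (τ / μ)), mul_assoc _ _ ‖_‖]
    refine enorm_pow_mul_psiM_sub_mul_le_of_rows hμ hlam (by linarith) hG hE hPr hβ ?_
      (hrow a (by omega)) (hrow (a + 1) (by omega)) (ih (by omega)) (ih (by omega))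
    refine (norm_pow_mul_le _ _ t).trans ?_
    gcongr
    exact norm_psiM_add_sub_le hμ hlam hτμ hG hE

end Perturbation

section Spectral

open scoped Matrix.Norms.L2Operator

variable {n : ℕ} {G : Matrix (Fin n) (Fin n) ℝ} {lam : Fin n → ℝ} {v : Fin n → Fin n → ℝ}

lemma psiM_transpose_mul_diagonal_mul {U : Matrix (Fin n) (Fin n) ℝ} (hU : U * Uᵀ = 1)
    (lam₁ μ : ℝ) (d : Fin n → ℝ) :
    psiM lam₁ μ (Uᵀ * diagonal d * U) = Uᵀ * diagonal (fun i ↦ psiR lam₁ μ (d i)) * U := by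
  have sq_eq : Uᵀ * diagonal d * U * (Uᵀ * diagonal d * U) = Uᵀ * diagonal (d ^ 2) * U := by
    calc _ = Uᵀ * diagonal d * (U * Uᵀ) * diagonal d * U := by simp only [Matrix.mul_assoc]
      _ = Uᵀ * (diagonal d * diagonal d) * U := by rw [hU, Matrix.mul_one, Matrix.mul_assoc Uᵀ]
      _ = _ := by simp only [diagonal_mul_diagonal, pow_two, Pi.mul_def]
  have psi_diag : diagonal (fun i ↦ psiR lam₁ μ (d i)) =
      (-(1 / (lam₁ * μ))) • diagonal (d ^ 2) + (1 / lam₁ + 1 / μ) • diagonal d := by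
    rw [← diagonal_smul, ← diagonal_smul, diagonal_add]
    rfl
  rw [psiM, sq_eq, psi_diag]
  simp only [Matrix.mul_add, Matrix.add_mul, Matrix.mul_smul, Matrix.smul_mul]

lemma norm_transpose_mul_diagonal_mul_le {U : Matrix (Fin n) (Fin n) ℝ} (hU : U * Uᵀ = 1)
    {d : Fin n → ℝ} {c : ℝ} (hc : 0 ≤ c) (hd : ∀ i, |d i| ≤ c) :
    ‖Uᵀ * diagonal d * U‖ ≤ c := by
  have mem : U ∈ unitary (Matrix (Fin n) (Fin n) ℝ) := by
    rw [Unitary.mem_iff, star_eq_conjTranspose, conjTranspose_eq_transpose_of_trivial]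
    exact ⟨mul_eq_one_comm.mp hU, hU⟩
  have mem_transpose : Uᵀ ∈ unitary (Matrix (Fin n) (Fin n) ℝ) := by
    simpa [star_eq_conjTranspose] using Unitary.star_mem mem
  rw [CStarRing.norm_mul_mem_unitary _ mem, CStarRing.norm_mem_unitary_mul _ mem_transpose,
    l2_opNorm_diagonal]
  exact (pi_norm_le_iff_of_nonneg hc).mpr hd

namespace IsSpectralDecomp

lemma dotProduct_mulVec (h : IsSpectralDecomp G lam v) (i j : Fin n) :
    v i ⬝ᵥ (G *ᵥ v j) = if i = j then lam i else 0 := by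
  rw [h.2.2, sum_mulVec, dotProduct_sum]
  simp only [smul_mulVec, vecMulVec_mulVec, dotProduct_smul, h.2.1]
  simp

lemma of_mul_transpose (h : IsSpectralDecomp G lam v) : of v * (of v)ᵀ = 1 := by
  ext i j
  simpa [mul_apply, dotProduct, one_apply] using h.2.1 i j

lemma eq_transpose_mul_diagonal_mul (h : IsSpectralDecomp G lam v) :
    G = (of v)ᵀ * diagonal lam * of v := by
  ext i j
  rw [h.2.2, mul_apply, Matrix.sum_apply]
  exact sum_congr rfl fun a _ ↦ by simp [vecMulVec_apply]; ring

lemma nonneg (h : IsSpectralDecomp G lam v) (hG : ∀ x, 0 ≤ x ⬝ᵥ (G *ᵥ x)) (i : Fin n) :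
    0 ≤ lam i := by
  simpa [h.dotProduct_mulVec] using hG (v i)

lemma norm_le (h : IsSpectralDecomp G lam v) (hG : ∀ x, 0 ≤ x ⬝ᵥ (G *ᵥ x)) (hn : 0 < n) :
    ‖G‖ ≤ lam ⟨0, hn⟩ := by
  rw [h.eq_transpose_mul_diagonal_mul]
  refine norm_transpose_mul_diagonal_mul_le h.of_mul_transpose (h.nonneg hG _) fun i ↦ ?_
  rw [abs_of_nonneg (h.nonneg hG i)]
  exact h.1 (Nat.zero_le i)

-- The span of two eigenvectors meets every hyperplane.
lemma le_of_forall_orthogonal (h : IsSpectralDecomp G lam v) {w : Fin n → ℝ} {c : ℝ}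
    (hc : ∀ x, w ⬝ᵥ x = 0 → x ⬝ᵥ (G *ᵥ x) ≤ c * (x ⬝ᵥ x)) {i j : Fin n} (hij : i < j) :
    lam j ≤ c := by
  by_cases hj : w ⬝ᵥ v j = 0
  · simpa [h.dotProduct_mulVec, h.2.1] using hc (v j) hj
  set a := w ⬝ᵥ v j
  set b := w ⬝ᵥ v i
  have form_le := hc (b • v j - a • v i) (by simp [dotProduct_sub, a, b, mul_comm])
  simp only [mulVec_sub, mulVec_smul, sub_dotProduct, dotProduct_sub, smul_dotProduct,
    dotProduct_smul, h.dotProduct_mulVec, h.2.1, hij.ne, hij.ne', if_true, if_false, smul_eq_mul,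
    mul_zero, mul_one, sub_zero, zero_sub] at form_le
  have anti : lam j ≤ lam i := h.1 hij.le
  refine le_of_mul_le_mul_right ?_
    (add_pos_of_nonneg_of_pos (mul_self_nonneg b) (mul_self_pos.mpr hj))
  nlinarith [mul_le_mul_of_nonneg_right anti (mul_self_nonneg a)]

end IsSpectralDecomp

lemma abs_psiR_le {lam₁ μ t η : ℝ} (hμ : 0 < μ) (hlam : 0 < lam₁) (ht : 0 ≤ t) (ht' : t ≤ lam₁)
    (hη : 0 ≤ η) (h : t = lam₁ ∨ t ≤ (1 + η) * μ) : |psiR lam₁ μ t| ≤ 1 + η := by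
  have factor : psiR lam₁ μ t = 1 + (1 - t / lam₁) * (t / μ - 1) := by
    unfold psiR; field_simp; ring
  have h₁ : 0 ≤ 1 - t / lam₁ := sub_nonneg.mpr ((div_le_one hlam).mpr ht')
  have h₂ : 0 ≤ t / lam₁ := by positivity
  rw [factor, abs_le]
  constructor
  · nlinarith [mul_nonneg h₁ (div_nonneg ht hμ.le)]
  · rcases h with rfl | h
    · simp [div_self hlam.ne', hη]
    · nlinarith [mul_nonneg h₁ (sub_nonneg.mpr ((div_le_iff₀ hμ).mpr h))]

end Spectral

section MeanMatrix

open scoped Matrix.Norms.L2Operator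

variable {n k : ℕ} {p q : ℝ} {cl : Fin n → Fin k}

/-- The membership matrix of a clustering: its columns are the indicators of the clusters. -/
def clusterIndicator (cl : Fin n → Fin k) : Matrix (Fin n) (Fin k) ℝ :=
  of fun v i ↦ if cl v = i then 1 else 0

/-- The matrix averaging a vector over each cluster. An empty cluster gives a zero row. -/
noncomputable def clusterAverage (cl : Fin n → Fin k) : Matrix (Fin k) (Fin n) ℝ :=
  diagonal (fun i ↦ (clusterSize cl i : ℝ)⁻¹) * (clusterIndicator cl)ᵀ

lemma clusterIndicator_mul {κ : Type*} (B : Matrix (Fin k) κ ℝ) :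
    clusterIndicator cl * B = B.submatrix cl id := by
  ext u j
  simp [clusterIndicator, mul_apply]

lemma enorm_clusterIndicator_row (cl : Fin n → Fin k) (u : Fin n) :
    enorm (clusterIndicator cl u) = 1 := by
  simp [enorm, clusterIndicator]

lemma clusterIndicator_transpose_mul_self (cl : Fin n → Fin k) :
    (clusterIndicator cl)ᵀ * clusterIndicator cl = diagonal fun i ↦ (clusterSize cl i : ℝ) := by
  ext i j
  rcases eq_or_ne i j with rfl | hij
  · simp [clusterIndicator, clusterSize, mul_apply, ← ite_and]
  · rw [diagonal_apply_ne _ hij, mul_apply]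
    refine sum_eq_zero fun v _ ↦ ?_
    simp only [clusterIndicator, transpose_apply, of_apply]
    grind

lemma clusterIndicator_mul_average_mul_self (cl : Fin n → Fin k) :
    clusterIndicator cl * clusterAverage cl * clusterIndicator cl = clusterIndicator cl := by
  rw [clusterAverage, Matrix.mul_assoc, Matrix.mul_assoc, clusterIndicator_transpose_mul_self,
    diagonal_mul_diagonal]
  ext u i
  rw [mul_diagonal, clusterIndicator, of_apply]
  split_ifs with hu
  · have : clusterSize cl i ≠ 0 := card_ne_zero_of_mem (mem_filter.mpr ⟨mem_univ u, hu⟩)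
    field_simp
  · exact zero_mul _

lemma clusterIndicator_mul_average_mul_meanMatrix (p q : ℝ) (cl : Fin n → Fin k) :
    clusterIndicator cl * clusterAverage cl * meanMatrix n k p q cl = meanMatrix n k p q cl := by
  have factor : meanMatrix n k p q cl =
      clusterIndicator cl * of fun i v ↦ if i = cl v then p else q := by
    rw [clusterIndicator_mul]
    rfl
  rw [factor, ← Matrix.mul_assoc, clusterIndicator_mul_average_mul_self]

lemma norm_clusterAverage_le {s : ℝ} (hs : 0 < s) (hcl : ∀ i, s ≤ clusterSize cl i) :
    ‖clusterAverage cl‖ ≤ √(1 / s) := by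
  have gram : (clusterAverage cl)ᵀᵀ * (clusterAverage cl)ᵀ =
      diagonal fun i ↦ (clusterSize cl i : ℝ)⁻¹ := by
    rw [clusterAverage, transpose_transpose, transpose_mul, transpose_transpose,
      diagonal_transpose, Matrix.mul_assoc, ← Matrix.mul_assoc _ (clusterIndicator cl),
      clusterIndicator_transpose_mul_self, diagonal_mul_diagonal, diagonal_mul_diagonal]
    congr 1
    ext i
    have : (clusterSize cl i : ℝ) ≠ 0 := (hs.trans_le (hcl i)).ne'
    field_simp
  rw [← norm_transpose]
  refine Real.le_sqrt_of_sq_le ?_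
  rw [← norm_transpose_mul_self, gram, l2_opNorm_diagonal, pi_norm_le_iff_of_nonneg (by positivity)]
  intro i
  rw [norm_inv, Real.norm_natCast, ← one_div]
  exact one_div_le_one_div_of_le hs (hcl i)

lemma dotProduct_meanMatrix_mulVec (cl : Fin n → Fin k) (x : Fin n → ℝ) :
    x ⬝ᵥ (meanMatrix n k p q cl *ᵥ x) =
      q * (∑ u, x u) ^ 2 + (p - q) * enorm ((clusterIndicator cl)ᵀ *ᵥ x) ^ 2 := by
  have decomp : meanMatrix n k p q cl =
      q • vecMulVec 1 1 + (p - q) • (clusterIndicator cl * (clusterIndicator cl)ᵀ) := by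
    rw [clusterIndicator_mul]
    ext u v
    simp only [meanMatrix, clusterIndicator, vecMulVec_apply, of_apply, Matrix.add_apply,
      Matrix.smul_apply, submatrix_apply, transpose_apply, id, Pi.one_apply, smul_eq_mul,
      eq_comm (a := cl v)]
    split_ifs <;> ring
  rw [decomp, add_mulVec, dotProduct_add, smul_mulVec, smul_mulVec, dotProduct_smul,
    dotProduct_smul, vecMulVec_mulVec, ← mulVec_mulVec, dotProduct_mulVec, ← mulVec_transpose,
    dotProduct_self_eq_enorm_sq]
  simp [pow_two, one_dotProduct, dotProduct_one]

lemma dotProduct_meanMatrix_mulVec_nonneg (hq : 0 ≤ q) (hqp : q ≤ p) (cl : Fin n → Fin k)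
    (x : Fin n → ℝ) : 0 ≤ x ⬝ᵥ (meanMatrix n k p q cl *ᵥ x) := by
  have := sub_nonneg.mpr hqp
  rw [dotProduct_meanMatrix_mulVec]
  positivity

lemma dotProduct_meanMatrix_mulVec_le_of_sum_eq_zero (hqp : q ≤ p) {S : ℝ} (hS : 0 ≤ S)
    (hcl : ∀ i, clusterSize cl i ≤ S) {x : Fin n → ℝ} (hx : ∑ u, x u = 0) :
    x ⬝ᵥ (meanMatrix n k p q cl *ᵥ x) ≤ (p - q) * S * (x ⬝ᵥ x) := by
  have norm_sq_le : ‖(clusterIndicator cl)ᵀ‖ ^ 2 ≤ S := by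
    rw [norm_transpose, ← norm_transpose_mul_self, clusterIndicator_transpose_mul_self,
      l2_opNorm_diagonal, pi_norm_le_iff_of_nonneg hS]
    exact fun i ↦ (Real.norm_natCast _).trans_le (hcl i)
  have := sub_nonneg.mpr hqp
  rw [dotProduct_meanMatrix_mulVec, hx, dotProduct_self_eq_enorm_sq, zero_pow two_ne_zero,
    mul_zero, zero_add, mul_assoc]
  gcongr
  calc enorm ((clusterIndicator cl)ᵀ *ᵥ x) ^ 2
      ≤ (‖(clusterIndicator cl)ᵀ‖ * enorm x) ^ 2 :=
        pow_le_pow_left₀ (enorm_nonneg _) (enorm_mulVec_le _ _) 2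
    _ ≤ S * enorm x ^ 2 := by rw [mul_pow]; gcongr

variable {lam : Fin n → ℝ} {v : Fin n → Fin n → ℝ}

lemma sub_mul_div_le_norm_meanMatrix (hn : 0 < n) (hq : 0 ≤ q) (hqp : q ≤ p)
    (cl : Fin n → Fin k) : (p - q) * (n / k) ≤ ‖meanMatrix n k p q cl‖ := by
  have hk : 0 < k := (cl ⟨0, hn⟩).pos
  have sum_size : ∑ i, (clusterSize cl i : ℝ) = n := by
    exact_mod_cast (card_eq_sum_card_fiberwise fun v _ ↦ mem_univ (cl v)).symm.trans (card_fin n)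
  have transpose_mulVec_one : (clusterIndicator cl)ᵀ *ᵥ 1 = fun i ↦ (clusterSize cl i : ℝ) := by
    ext i
    simp [mulVec, dotProduct, clusterIndicator, clusterSize]
  have sq_le : (n : ℝ) ^ 2 ≤ k * enorm ((clusterIndicator cl)ᵀ *ᵥ 1) ^ 2 := by
    rw [transpose_mulVec_one, enorm_sq, ← sum_size]
    simpa using sq_sum_le_card_mul_sum_sq (s := univ) (f := fun i ↦ (clusterSize cl i : ℝ))
  have := sub_nonneg.mpr hqp
  refine le_of_mul_le_mul_right ?_ (show 0 < (n : ℝ) by positivity)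
  calc (p - q) * (n / k) * n = (p - q) * (n ^ 2 / k) := by ring
    _ ≤ (p - q) * enorm ((clusterIndicator cl)ᵀ *ᵥ 1) ^ 2 := by
        gcongr
        exact (div_le_iff₀' (by positivity)).mpr sq_le
    _ ≤ 1 ⬝ᵥ (meanMatrix n k p q cl *ᵥ 1) := by
        rw [dotProduct_meanMatrix_mulVec]
        exact le_add_of_nonneg_left (by positivity)
    _ ≤ ‖meanMatrix n k p q cl‖ * (1 ⬝ᵥ 1) := dotProduct_mulVec_self_le _ _
    _ = ‖meanMatrix n k p q cl‖ * n := by simp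

lemma norm_psiM_meanMatrix_le (hn : 0 < n) (hq : 0 ≤ q) (hqp : q < p)
    (h : IsSpectralDecomp (meanMatrix n k p q cl) lam v) {η : ℝ} (hη : 0 ≤ η)
    (hcl : ∀ i, clusterSize cl i ≤ (1 + η) * (n / k)) :
    ‖psiM (lam ⟨0, hn⟩) ((p - q) * (n / k)) (meanMatrix n k p q cl)‖ ≤ 1 + η := by
  have hk : 0 < k := (cl ⟨0, hn⟩).pos
  have hμ : 0 < (p - q) * (n / k) := mul_pos (sub_pos.mpr hqp) (by positivity)
  have form_nonneg := dotProduct_meanMatrix_mulVec_nonneg hq hqp.le cl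
  have hlam : (p - q) * (n / k) ≤ lam ⟨0, hn⟩ :=
    (sub_mul_div_le_norm_meanMatrix hn hq hqp.le cl).trans (h.norm_le form_nonneg hn)
  rw [h.eq_transpose_mul_diagonal_mul, psiM_transpose_mul_diagonal_mul h.of_mul_transpose]
  refine norm_transpose_mul_diagonal_mul_le h.of_mul_transpose (by positivity) fun i ↦
    abs_psiR_le hμ (hμ.trans_le hlam) (h.nonneg form_nonneg i) (h.1 (Nat.zero_le i)) hη ?_
  rcases eq_or_ne i ⟨0, hn⟩ with rfl | hi
  · exact Or.inl rfl
  · refine Or.inr (h.le_of_forall_orthogonal (w := 1) (i := ⟨0, hn⟩) (fun x hx ↦ ?_)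
      (lt_of_le_of_ne (Nat.zero_le i) hi.symm))
    rw [mul_left_comm]
    exact dotProduct_meanMatrix_mulVec_le_of_sum_eq_zero hqp.le (by positivity) hcl
      (by rwa [← one_dotProduct])

end MeanMatrix

section MiddleTerms

open scoped Matrix.Norms.L2Operator

/-- The matrix `M'`. Repeatedly splitting off the leftmost factor of a power gives
`F̂ ^ r = F * F̂ ^ (r - 1) + middleTerms F F̂ r + (F̂ - F) ^ r` for `r ≠ 0`. -/
def middleTerms {A : Type*} [Ring A] (F Fhat : A) (r : ℕ) : A :=
  ∑ t ∈ Ico 1 r, (Fhat - F) ^ t * F * Fhat ^ (r - 1 - t)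

lemma enorm_mul_middleTerms_le {V : Type*} [Fintype V] [DecidableEq V] {E F Fhat : Matrix V V ℝ}
    {r : ℕ} {u : V} {b x K : ℝ} (hx : 0 ≤ x) (hx' : x < 1) (hb : 0 ≤ b)
    (hK : 0 ≤ K) (hrow : ∀ t < r, enorm ((E * ((Fhat - F) ^ t * F)) u) ≤ b * x ^ t)
    (hpow : ∀ j < r, ‖Fhat ^ j‖ ≤ K) :
    enorm ((E * middleTerms F Fhat r) u) ≤ b * K * (x / (1 - x)) :=
  calc enorm ((E * middleTerms F Fhat r) u)
      ≤ ∑ t ∈ Ico 1 r, enorm ((E * ((Fhat - F) ^ t * F * Fhat ^ (r - 1 - t))) u) := by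
        rw [middleTerms, Matrix.mul_sum]
        exact (congrArg enorm (Finset.sum_apply _ _ _)).trans_le (enorm_sum_le _ _)
    _ ≤ ∑ t ∈ Ico 1 r, b * x ^ t * K := by
        refine sum_le_sum fun t ht ↦ ?_
        have htr : t < r := (mem_Ico.mp ht).2
        rw [← Matrix.mul_assoc]
        refine (enorm_mul_row_le _ _ _).trans ?_
        gcongr
        exacts [hrow t htr, hpow _ (by omega)]
    _ = b * K * ∑ t ∈ Ico 1 r, x ^ t := by rw [mul_sum]; exact sum_congr rfl fun t _ ↦ by ring
    _ ≤ b * K * (x / (1 - x)) := by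
        gcongr
        simpa using geom_sum_Ico_le_of_lt_one hx hx' (m := 1) (n := r)

lemma norm_pow_le_three {A : Type*} [NormedRing A] [NormOneClass A] {x : A} {l : ℝ} (hl : 0 < l)
    (hx : ‖x‖ ≤ 1 + 1 / l) {j : ℕ} (hj : j ≤ l) : ‖x ^ j‖ ≤ 3 :=
  calc ‖x ^ j‖ ≤ (1 + 1 / l) ^ j := (norm_pow_le x j).trans (by gcongr)
    _ ≤ Real.exp (1 / l) ^ j := by
        gcongr
        rw [add_comm]
        exact Real.add_one_le_exp _
    _ = Real.exp (j / l) := by rw [← Real.exp_nat_mul, mul_one_div]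
    _ ≤ Real.exp 1 := Real.exp_le_exp.mpr ((div_le_one hl).mpr hj)
    _ ≤ 3 := Real.exp_one_lt_three.le

lemma norm_psiM_pow_le_three {n : ℕ} {lam μ l δ : ℝ} {G E : Matrix (Fin n) (Fin n) ℝ}
    [Nonempty (Fin n)] (hl : 0 < l) (hF : ‖psiM lam μ G‖ ≤ 1 + 1 / (16 * l))
    (hD : ‖psiM lam μ (G + E) - psiM lam μ G‖ ≤ δ) (hδ : δ ≤ 1 / (100 * l)) {j : ℕ} (hj : j ≤ l) :
    ‖psiM lam μ (G + E) ^ j‖ ≤ 3 := by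
  refine norm_pow_le_three hl ?_ hj
  have : 1 / (16 * l) + 1 / (100 * l) ≤ 1 / l := by field_simp; norm_num
  linarith [norm_le_norm_add_norm_sub' (psiM lam μ (G + E)) (psiM lam μ G)]

theorem enorm_mul_middleTerms_psiM_le {n r : ℕ} {lam μ τ β l : ℝ}
    {G E Pr : Matrix (Fin n) (Fin n) ℝ} {u : Fin n} (hμ : 0 < μ) (hlam : μ ≤ lam) (hl : 1 ≤ l)
    (hτ : 10 * (τ / μ) ≤ 1 / (100 * l)) (hG : ‖G‖ ≤ lam) (hE : ‖E‖ ≤ 2 * τ) (hPr : Pr * G = G)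
    (hF : ‖psiM lam μ G‖ ≤ 1 + 1 / (16 * l)) (hr : r ≤ l + 1)
    (hrow : ∀ a ≤ 2 * r, enorm ((E ^ a * Pr) u) ≤ β * τ ^ a) :
    enorm ((E * middleTerms (psiM lam μ G) (psiM lam μ (G + E)) r) u) ≤ β * τ / (20 * l) := by
  have : Nonempty (Fin n) := ⟨u⟩
  have hτ_nonneg : 0 ≤ τ := by linarith [(norm_nonneg E).trans hE]
  have hβ : 0 ≤ β := by simpa using (enorm_nonneg _).trans (hrow 0 (Nat.zero_le _))
  set x := 10 * (τ / μ)
  have hx : 0 ≤ x := by positivity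
  have hxl : x * (100 * l) ≤ 1 := (le_div_iff₀ (by positivity)).mp hτ
  have hx_le : x ≤ 1 / 100 := by nlinarith
  have hτμ : 2 * τ ≤ μ := by
    have := (div_le_iff₀ hμ).mp (show τ / μ ≤ 1 / 1000 by linarith)
    linarith
  have hD := norm_psiM_add_sub_le hμ hlam hτμ hG hE
  have hrow_D (t : ℕ) (ht : t < r) := enorm_pow_mul_psiM_sub_pow_mul_le (u := u) hμ hlam hτμ hG hE
    hPr hrow t (a := 1) (by omega)
  have hpow (j : ℕ) (hj : j < r) : ‖psiM lam μ (G + E) ^ j‖ ≤ 3 := by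
    have : (j : ℝ) + 1 ≤ r := by exact_mod_cast hj
    exact norm_psiM_pow_le_three (by linarith) hF hD hτ (by linarith)
  have hF_le : ‖psiM lam μ G‖ ≤ 17 / 16 := by
    have : 1 / (16 * l) ≤ 1 / 16 := one_div_le_one_div_of_le (by norm_num) (by linarith)
    linarith
  have geom_le : x / (1 - x) ≤ 1 / (99 * l) := by
    rw [div_le_div_iff₀ (by linarith) (by positivity)]
    nlinarith
  calc enorm ((E * middleTerms (psiM lam μ G) (psiM lam μ (G + E)) r) u)
      ≤ β * τ * ‖psiM lam μ G‖ * 3 * (x / (1 - x)) := by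
        refine enorm_mul_middleTerms_le hx (by linarith) (by positivity) (by norm_num)
          (fun t ht ↦ ?_) hpow
        simpa only [pow_one, mul_assoc, mul_comm ‖psiM lam μ G‖] using hrow_D t ht
    _ ≤ β * τ * (17 / 16) * 3 * (1 / (99 * l)) :=
        mul_le_mul (by gcongr) geom_le (div_nonneg hx (by linarith)) (by positivity)
    _ = β * τ / (20 * l) * (340 / 528) := by field_simp; ring
    _ ≤ β * τ / (20 * l) := mul_le_of_le_one_right (by positivity) (by norm_num)

end MiddleTerms

section GoodEvent

variable {V κ Ω : Type*} [Fintype V] [Fintype κ]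

/-- The event on which the deterministic part of the argument runs, for `B` the identity or the
cluster indicator matrix: the rows of `M ^ a * B` are at most `τ ^ a` for all powers up to `R`. -/
def RowsBounded [DecidableEq V] (τ : ℝ) (R : ℕ) (B : Matrix V κ ℝ) (M : Matrix V V ℝ) : Prop :=
  ∀ a ≤ R, ∀ u, enorm ((M ^ a * B) u) ≤ τ ^ a

theorem IsBoundedWigner.measure_not_rowsBounded_le [LinearOrder V] [MeasurableSpace Ω]
    {P : Measure Ω} {p : ℝ} {E : Ω → Matrix V V ℝ} {B : Matrix V κ ℝ}
    (hE : IsBoundedWigner P p E) (hp_one : p ≤ 1) (hVp : 1 ≤ Fintype.card V * p)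
    (hB : ∀ v, enorm (B v) ≤ 1) (hlog : 4 ≤ Real.log (Fintype.card V)) {R : ℕ}
    (hR : R ≤ 2 * Real.log (Fintype.card V) + 2) :
    P {ω | ¬ RowsBounded (rowScale (Fintype.card V) p) R B (E ω)} ≤
      ENNReal.ofReal (12 / Fintype.card V ^ 2) := by
  set N := Fintype.card V
  set l := Real.log N
  have hN : (0 : ℝ) < N := by
    have : N ≠ 0 := by rintro h; simp [l, h] at hlog; linarith
    positivity
  have subset : {ω | ¬ RowsBounded (rowScale N p) R B (E ω)} ⊆
      ⋃ a ∈ Icc 1 R, ⋃ u ∈ univ, {ω | rowScale N p ^ a < enorm ((E ω ^ a * B) u)} := by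
    intro ω hω
    simp only [RowsBounded, Set.mem_ofPred_eq, not_forall, not_le] at hω
    obtain ⟨a, haR, u, hau⟩ := hω
    have ha : a ≠ 0 := by rintro rfl; exact absurd (hB u) (by simpa using hau)
    simp only [Set.mem_iUnion]
    exact ⟨a, mem_Icc.mpr ⟨Nat.one_le_iff_ne_zero.mpr ha, haR⟩, u, mem_univ u, hau⟩
  calc P {ω | ¬ RowsBounded (rowScale N p) R B (E ω)}
      ≤ ∑ a ∈ Icc 1 R, ∑ u : V, P {ω | rowScale N p ^ a < enorm ((E ω ^ a * B) u)} :=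
        (measure_mono subset).trans <| (measure_biUnion_finset_le _ _).trans <|
          sum_le_sum fun _ _ ↦ measure_biUnion_finset_le _ _
    _ ≤ ∑ _a ∈ Icc 1 R, ∑ _u : V, ENNReal.ofReal (4 * l / N ^ 5) := by
        refine sum_le_sum fun a ha ↦ sum_le_sum fun u _ ↦ ?_
        obtain ⟨ha_pos, haR⟩ := mem_Icc.mp ha
        exact hE.measure_lt_enorm_le hp_one hVp hB hlog (by omega)
          ((Nat.cast_le.mpr haR).trans hR) u
    _ = ENNReal.ofReal (R * (N * (4 * l / N ^ 5))) := by
        simp [N, ENNReal.ofReal_mul]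
    _ ≤ ENNReal.ofReal (12 / N ^ 2) := by
        refine ENNReal.ofReal_le_ofReal ?_
        have hlN : l ≤ N := (Real.log_le_sub_one_of_pos hN).trans (by linarith)
        calc (R : ℝ) * (N * (4 * l / N ^ 5)) ≤ 3 * (N : ℝ) * (N * (4 * N / N ^ 5)) := by
              gcongr
              linarith
          _ = 12 / (N : ℝ) ^ 2 := by field_simp; norm_num

end GoodEvent

section Assembly

open scoped Matrix.Norms.L2Operator

variable {n k : ℕ} {p q : ℝ} {cl : Fin n → Fin k}

lemma le_four_pow_ceil_log (n : ℕ) : n ≤ 4 ^ ⌈Real.log n⌉₊ := by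
  rcases n.eq_zero_or_pos with rfl | hn
  · simp
  have : (n : ℝ) ≤ 4 ^ ⌈Real.log n⌉₊ :=
    calc (n : ℝ) = Real.exp (Real.log n) := (Real.exp_log (by positivity)).symm
      _ ≤ Real.exp ⌈Real.log n⌉₊ := Real.exp_le_exp.mpr (Nat.le_ceil _)
      _ = Real.exp 1 ^ ⌈Real.log n⌉₊ := by rw [← Real.exp_nat_mul, mul_one]
      _ ≤ 4 ^ ⌈Real.log n⌉₊ := by gcongr; linarith [Real.exp_one_lt_three]
  exact_mod_cast this

lemma four_le_log_of_le {n : ℕ} (hn : 100 ≤ n) : 4 ≤ Real.log n := by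
  rw [Real.le_log_iff_exp_le (by positivity)]
  calc Real.exp 4 = Real.exp 1 ^ 4 := by rw [← Real.exp_nat_mul]; norm_num
    _ ≤ 3 ^ 4 := by gcongr; exact Real.exp_one_lt_three.le
    _ ≤ (100 : ℕ) := by norm_num
    _ ≤ n := by exact_mod_cast hn

lemma ofReal_one_sub_div_sq_eq_zero {n : ℕ} (hn_pos : 0 < n) (hn : n ≤ 100) :
    ENNReal.ofReal (1 - 10000 / (n : ℝ) ^ 2) = 0 := by
  refine ENNReal.ofReal_eq_zero.mpr (sub_nonpos.mpr ((one_le_div (by positivity)).mpr ?_))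
  calc (n : ℝ) ^ 2 ≤ (100 : ℕ) ^ 2 := by gcongr
    _ = 10000 := by norm_num

lemma rowScale_div_le (hn : 0 < n) (hk : 0 < k) (hp : 0 ≤ p) (hqp : q < p)
    (hlog : 0 < Real.log n)
    (hsize : 2500000000 * k ^ 2 * p * Real.log n ^ 4 / (p - q) ^ 2 ≤ n) :
    10 * (rowScale n p / ((p - q) * (n / k))) ≤ 1 / (100 * Real.log n) := by
  have : 0 < p - q := sub_pos.mpr hqp
  have scale_sq : (50000 * Real.log n ^ 2 * k) ^ 2 * (n * p) ≤ ((p - q) * n) ^ 2 :=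
    calc (50000 * Real.log n ^ 2 * k) ^ 2 * (n * p)
        = 2500000000 * k ^ 2 * p * Real.log n ^ 4 * n := by ring
      _ ≤ n * (p - q) ^ 2 * n :=
          mul_le_mul_of_nonneg_right ((div_le_iff₀ (by positivity)).mp hsize) (by positivity)
      _ = ((p - q) * n) ^ 2 := by ring
  have scale : 50000 * Real.log n ^ 2 * k * √(n * p) ≤ (p - q) * n := by
    refine le_of_pow_le_pow_left₀ two_ne_zero (by positivity) ?_
    rwa [mul_pow, Real.sq_sqrt (by positivity)]
  rw [rowScale, ← mul_div_assoc, div_le_div_iff₀ (by positivity) (by positivity), one_mul,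
    mul_div_assoc', le_div_iff₀ (by positivity)]
  linarith

lemma one_le_mul_of_size (hk : 0 < k) (hq : 0 ≤ q) (hqp : q < p) (hlog : 1 ≤ Real.log n)
    (hsize : 2500000000 * k ^ 2 * p * Real.log n ^ 4 / (p - q) ^ 2 ≤ n) : 1 ≤ n * p := by
  have : 0 < p - q := sub_pos.mpr hqp
  have hp : 0 < p := hq.trans_lt hqp
  have hk_one : (1 : ℝ) ≤ k := by exact_mod_cast hk
  calc (1 : ℝ) ≤ 2500000000 * k ^ 2 * 1 * Real.log n ^ 4 := by
        nlinarith [one_le_pow₀ hk_one (n := 2), one_le_pow₀ hlog (n := 4)]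
    _ = 2500000000 * k ^ 2 * p * Real.log n ^ 4 / p ^ 2 * p := by field_simp
    _ ≤ 2500000000 * k ^ 2 * p * Real.log n ^ 4 / (p - q) ^ 2 * p := by gcongr; linarith
    _ ≤ n * p := by gcongr

lemma half_le_clusterSize (hbal : Balanced n k cl) (hlog : 1 ≤ Real.log n) (i : Fin k) :
    (n : ℝ) / (2 * k) ≤ clusterSize cl i := by
  have : 1 / (16 * Real.log n) ≤ 1 / 2 := one_div_le_one_div_of_le two_pos (by linarith)
  calc (n : ℝ) / (2 * k) = 1 / 2 * (n / k) := by ring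
    _ ≤ (1 - 1 / (16 * Real.log n)) * (n / k) := by gcongr; linarith
    _ ≤ clusterSize cl i := (hbal i).1

lemma RowsBounded.enorm_pow_mul_clusterIndicator_mul_average_le {τ s : ℝ} {R : ℕ}
    {M : Matrix (Fin n) (Fin n) ℝ} (hM : RowsBounded τ R (clusterIndicator cl) M) (hs : 0 < s)
    (hcl : ∀ i, s ≤ clusterSize cl i) {a : ℕ} (ha : a ≤ R) (u : Fin n) :
    enorm ((M ^ a * (clusterIndicator cl * clusterAverage cl)) u) ≤ √(1 / s) * τ ^ a := by
  rw [← Matrix.mul_assoc, mul_comm]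
  refine (enorm_mul_row_le _ _ _).trans ?_
  exact mul_le_mul (hM a ha u) (norm_clusterAverage_le hs hcl) (norm_nonneg _)
    ((enorm_nonneg _).trans (hM a ha u))

lemma sqrt_mul_rowScale_div_le (hn : 0 < n) (hlog : 0 < Real.log n) :
    √(1 / (n / (2 * k))) * rowScale n p / (20 * Real.log n) ≤ 5 * √(k * p) := by
  have sqrt_two_le : √2 ≤ 2 := Real.sqrt_le_iff.mpr ⟨by norm_num, by norm_num⟩
  calc √(1 / (n / (2 * k))) * rowScale n p / (20 * Real.log n)
      = 5 / 2 * (√(1 / (n / (2 * k))) * √(n * p)) := by rw [rowScale]; field_simp; ring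
    _ = 5 / 2 * (√2 * √(k * p)) := by
        rw [← Real.sqrt_mul (by positivity), ← Real.sqrt_mul (by norm_num)]
        congr 2
        field_simp
    _ ≤ 5 / 2 * (2 * √(k * p)) := by gcongr
    _ = 5 * √(k * p) := by ring

theorem n2i_mul_middleTerms_le (hn : 0 < n) (hq : 0 ≤ q) (hqp : q < p)
    (hbal : Balanced n k cl) (hlog : 1 ≤ Real.log n)
    (hsize : 2500000000 * k ^ 2 * p * Real.log n ^ 4 / (p - q) ^ 2 ≤ n)
    {lam : Fin n → ℝ} {v : Fin n → Fin n → ℝ}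
    (hdec : IsSpectralDecomp (meanMatrix n k p q cl) lam v)
    {E : Matrix (Fin n) (Fin n) ℝ} (hE : E.IsSymm)
    (hone : RowsBounded (rowScale n p) (2 * ⌈Real.log n⌉₊) (1 : Matrix (Fin n) (Fin n) ℝ) E)
    (hcluster : RowsBounded (rowScale n p) (2 * ⌈Real.log n⌉₊) (clusterIndicator cl) E) :
    n2i (E * middleTerms (psiM (lam ⟨0, hn⟩) ((p - q) * (n / k)) (meanMatrix n k p q cl))
      (psiM (lam ⟨0, hn⟩) ((p - q) * (n / k)) (meanMatrix n k p q cl + E)) ⌈Real.log n⌉₊) ≤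
      5 * √(k * p) := by
  have : Nonempty (Fin n) := ⟨⟨0, hn⟩⟩
  have hk : 0 < k := (cl ⟨0, hn⟩).pos
  have hlog_pos : 0 < Real.log n := one_pos.trans_le hlog
  have norm_G_le := hdec.norm_le (dotProduct_meanMatrix_mulVec_nonneg hq hqp.le cl) hn
  have norm_E_le : ‖E‖ ≤ 2 * rowScale n p :=
    norm_le_two_mul_of_enorm_pow_le hE (Nat.ceil_pos.mpr hlog_pos).ne'
      (by simpa using le_four_pow_ceil_log n) (rowScale_nonneg n p)
      fun u ↦ by simpa using hone _ (Nat.le_mul_of_pos_left _ two_pos) u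
  have norm_psi_le := norm_psiM_meanMatrix_le hn hq hqp hdec
    (η := 1 / (16 * Real.log n)) (by positivity) fun i ↦ (hbal i).2
  refine ciSup_le fun u ↦ (enorm_mul_middleTerms_psiM_le (mul_pos (sub_pos.mpr hqp) (by positivity))
    ((sub_mul_div_le_norm_meanMatrix hn hq hqp.le cl).trans norm_G_le) hlog
    (rowScale_div_le hn hk (hq.trans hqp.le) hqp hlog_pos hsize) norm_G_le norm_E_le
    (clusterIndicator_mul_average_mul_meanMatrix p q cl) norm_psi_le
    (Nat.ceil_lt_add_one hlog_pos.le).le fun a ha ↦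
      hcluster.enorm_pow_mul_clusterIndicator_mul_average_le (s := n / (2 * k)) (by positivity)
        (half_le_clusterSize hbal hlog) ha u).trans ?_
  exact sqrt_mul_rowScale_div_le hn hlog_pos

lemma ofReal_one_sub_add_le_measure {Ω : Type*} [MeasurableSpace Ω] {P : Measure Ω}
    [IsProbabilityMeasure P] {A B C : Set Ω} {b c : ℝ} (hb : 0 ≤ b) (hc : 0 ≤ c)
    (hB : P B ≤ ENNReal.ofReal b) (hC : P C ≤ ENNReal.ofReal c)
    (hA : ∀ ω, ω ∉ B → ω ∉ C → ω ∈ A) : ENNReal.ofReal (1 - (b + c)) ≤ P A := by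
  have cover : Set.univ ⊆ A ∪ (B ∪ C) := fun ω _ ↦ by
    by_contra h
    simp only [Set.mem_union, not_or] at h
    exact h.1 (hA ω h.2.1 h.2.2)
  rw [ENNReal.ofReal_sub _ (by positivity), ENNReal.ofReal_one, tsub_le_iff_right]
  calc 1 = P Set.univ := measure_univ.symm
    _ ≤ P A + (P B + P C) := (measure_mono cover).trans <|
        (measure_union_le _ _).trans (add_le_add le_rfl (measure_union_le _ _))
    _ ≤ P A + ENNReal.ofReal (b + c) := by rw [ENNReal.ofReal_add hb hc]; gcongr

theorem EM'_bound_general (hn : 0 < n) (hq : 0 ≤ q) (hqp : q < p) (hp : p ≤ 1)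
    (hbal : Balanced n k cl)
    (hsize : 2500000000 * k ^ 2 * p * Real.log n ^ 4 / (p - q) ^ 2 ≤ n)
    {lam : Fin n → ℝ} {v : Fin n → Fin n → ℝ}
    (hdec : IsSpectralDecomp (meanMatrix n k p q cl) lam v)
    {Ω : Type*} [MeasureSpace Ω] {E : Ω → Matrix (Fin n) (Fin n) ℝ} (hE : NoiseModel p q cl E) :
    ENNReal.ofReal (1 - 10000 / (n : ℝ) ^ 2) ≤
      ℙ {ω | n2i (E ω * middleTerms
          (psiM (lam ⟨0, hn⟩) ((p - q) * (n / k)) (meanMatrix n k p q cl))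
          (psiM (lam ⟨0, hn⟩) ((p - q) * (n / k)) (meanMatrix n k p q cl + E ω))
          ⌈Real.log n⌉₊) ≤ 5 * √(k * p)} := by
  rcases le_total n 100 with hsmall | hlarge
  · exact (ofReal_one_sub_div_sq_eq_zero hn hsmall).trans_le zero_le
  have hlog := four_le_log_of_le hlarge
  have hW := hE.isBoundedWigner hq hqp.le hp
  have := hW.isProbabilityMeasure
  have hnp := one_le_mul_of_size (cl ⟨0, hn⟩).pos hq hqp (by linarith) hsize
  have hR : ((2 * ⌈Real.log n⌉₊ : ℕ) : ℝ) ≤ 2 * Real.log n + 2 := by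
    push_cast
    linarith [Nat.ceil_lt_add_one (by linarith : 0 ≤ Real.log n)]
  have failure {κ : Type} [Fintype κ] (B : Matrix (Fin n) κ ℝ) (hB : ∀ u, enorm (B u) ≤ 1) :
      ℙ {ω | ¬ RowsBounded (rowScale n p) (2 * ⌈Real.log n⌉₊) B (E ω)} ≤
        ENNReal.ofReal (12 / n ^ 2) := by
    simpa using hW.measure_not_rowsBounded_le hp (by simpa using hnp) hB (by simpa using hlog)
      (by simpa using hR)
  refine (ENNReal.ofReal_le_ofReal ?_).trans <| ofReal_one_sub_add_le_measure (by positivity)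
    (by positivity) (failure 1 fun u ↦ ?_)
    (failure (clusterIndicator cl) fun u ↦ (enorm_clusterIndicator_row cl u).le)
    fun ω hone hcluster ↦ n2i_mul_middleTerms_le hn hq hqp hbal (by linarith) hsize hdec (hE.1 ω)
      (not_not.mp hone) (not_not.mp hcluster)
  · have : (12 : ℝ) / n ^ 2 + 12 / n ^ 2 = 24 / n ^ 2 := by ring
    rw [this]
    gcongr
    norm_num
  · simp [enorm, Matrix.one_apply]

end Assembly

end SBM

open SBM in
/-- Upper bound of `‖E·M′‖_{2→∞}`. There are constants `C, c > 0` such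
that: if the partition is balanced, `k ≥ 2` and `n ≥ C·k²·p·(log n)¹²/(p−q)²`, then with
probability at least `1 − c·n^{−2}` over `E`, `‖E·M′‖_{2→∞} ≤ 6·10⁶·√(kp)·(log n)²`, where
`M′ = Σ_{t=1}^{r−1} Dᵗ·F·F̂^{r−1−t}` with `D = ψ(Ĝ) − ψ(G)`, `F = ψ(G)`, `F̂ = ψ(Ĝ)` and
`r = ⌈log n⌉`. -/
theorem EM'_bound :
    ∃ C > (0 : ℝ), ∃ c > (0 : ℝ),
      ∀ (n k : ℕ) (hn : 0 < n) (hk : 2 ≤ k)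
        (p q : ℝ) (hq : 0 ≤ q) (hpq : q < p) (hp : p ≤ 1)
        (cl : Fin n → Fin k) (hbal : Balanced n k cl)
        (hsize : (n : ℝ) ≥ C * k ^ 2 * p * (Real.log n) ^ 12 / (p - q) ^ 2)
        (lamG : Fin n → ℝ) (vG : Fin n → Fin n → ℝ)
        (hdecG : IsSpectralDecomp (meanMatrix n k p q cl) lamG vG)
        (Ω : Type) (_ : MeasureSpace Ω) (_ : IsProbabilityMeasure (ℙ : Measure Ω))
        (E : Ω → Matrix (Fin n) (Fin n) ℝ) (hE : NoiseModel p q cl E),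
        ENNReal.ofReal (1 - c / (n : ℝ) ^ 2) ≤
          ℙ {ω : Ω |
            n2i (E ω * ∑ t ∈ Finset.Ico 1 ⌈Real.log n⌉₊,
                (psiM (lamG ⟨0, hn⟩) ((p - q) * ((n : ℝ) / k))
                      (meanMatrix n k p q cl + E ω) -
                    psiM (lamG ⟨0, hn⟩) ((p - q) * ((n : ℝ) / k))
                      (meanMatrix n k p q cl)) ^ t *
                  psiM (lamG ⟨0, hn⟩) ((p - q) * ((n : ℝ) / k)) (meanMatrix n k p q cl) *
                  psiM (lamG ⟨0, hn⟩) ((p - q) * ((n : ℝ) / k))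
                      (meanMatrix n k p q cl + E ω) ^ (⌈Real.log n⌉₊ - 1 - t)) ≤
              6000000 * Real.sqrt ((k : ℝ) * p) * (Real.log n) ^ 2} := by
  refine ⟨2500000000, by norm_num, 10000, by norm_num, ?_⟩
  intro n k hn hk p q hq hpq hp cl hbal hsize lamG vG hdecG Ω _ _ E hE
  rcases le_total n 100 with hsmall | hlarge
  · exact (ofReal_one_sub_div_sq_eq_zero hn hsmall).trans_le zero_le
  have hlog : 1 ≤ Real.log n := by linarith [four_le_log_of_le hlarge]
  have hsize' : 2500000000 * k ^ 2 * p * Real.log n ^ 4 / (p - q) ^ 2 ≤ n := by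
    refine le_trans ?_ hsize
    have : 0 ≤ p := hq.trans hpq.le
    gcongr
    norm_num
  have hbound : 5 * √(k * p) ≤ 6000000 * √(k * p) * Real.log n ^ 2 := by
    nlinarith [Real.sqrt_nonneg (k * p), one_le_pow₀ hlog (n := 2)]
  exact (EM'_bound_general hn hq hpq hp hbal hsize' hdecG hE).trans
    (measure_mono fun ω hω ↦ (hω.trans hbound :))
end
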